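/- arXiv:1801.01696 — 2 statements merged into one kernel-verified Lean document; each statement's English description precedes it below -/
import Mathlib

section
/- Posterior risk bound on the large-threshold event (Cauchy slab): for every real μ, with B = {t̂ > t_n} where t̂ = t(ĥα) and t_n² = 2·log n − 5·log log n, and with α_A = t^{−1}(t_A), t_A = √(2(1+A)·log n), one has for x ~ N(μ,1): E_μ[r_2(α_A, μ, x)·1_B] ≤ C·(t_A² + 1)·P(B)^{1/2} for a universal constant C. -/
/-!
Statement 13: posterior risk bound on the large-threshold event, for the
spike and Cauchy slab prior with the modified empirical Bayes estimator.
-/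

open MeasureTheory Real Set

noncomputable section

/-- Standard Cauchy density. -/
def cauchyDen (x : ℝ) : ℝ := (Real.pi * (1 + x ^ 2))⁻¹


/-- Standard normal density. -/
def phi (x : ℝ) : ℝ := Real.exp (-x ^ 2 / 2) / Real.sqrt (2 * Real.pi)

/-- Standard Laplace density. -/
def lapDen (x : ℝ) : ℝ := Real.exp (-|x|) / 2

/-- Convolution `g = φ * γ`. -/
def conv (γ : ℝ → ℝ) (x : ℝ) : ℝ := ∫ u, phi (x - u) * γ u

/-- Posterior weight `a(x) = α g(x) / ((1-α) φ(x) + α g(x))`. -/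
def aWt (γ : ℝ → ℝ) (α x : ℝ) : ℝ :=
  α * conv γ x / ((1 - α) * phi x + α * conv γ x)

/-- Density of the single-coordinate posterior with respect to `volume + δ₀`:
the point mass `1 - a(x)` at `0`, and the continuous part `a(x) γ_x`. -/
def coordDen (γ : ℝ → ℝ) (α x u : ℝ) : ℝ :=
  if u = 0 then 1 - aWt γ α x else aWt γ α x * (phi (x - u) * γ u / conv γ x)

/-- Single-coordinate posterior `(1 - a(x)) δ₀ + a(x) G_x`. -/
def coordPost (γ : ℝ → ℝ) (α x : ℝ) : Measure ℝ :=
  (volume + Measure.dirac (0 : ℝ)).withDensity fun u => ENNReal.ofReal (coordDen γ α x u)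

/-- The spike and slab posterior `Π_α[· | X]` on `ℝⁿ`, for a fixed weight `α`. -/
def post (γ : ℝ → ℝ) (n : ℕ) (α : ℝ) (X : Fin n → ℝ) : Measure (Fin n → ℝ) :=
  Measure.pi fun i => coordPost γ α (X i)

/-- Law `P_θ` of the data `X`, `X_i = θ_i + ε_i` with `ε_i` i.i.d. `N(0,1)`. -/
def Pdata (n : ℕ) (θ : Fin n → ℝ) : Measure (Fin n → ℝ) :=
  Measure.pi fun i => ProbabilityTheory.gaussianReal (θ i) 1

/-- The class `ℓ₀[s]` of `s`-sparse vectors. -/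
def ell0 (n s : ℕ) : Set (Fin n → ℝ) := {θ | Nat.card {i : Fin n // θ i ≠ 0} ≤ s}

/-- Log-marginal likelihood `ℓ_n(α; X)`. -/
def logMarg (γ : ℝ → ℝ) {n : ℕ} (α : ℝ) (X : Fin n → ℝ) : ℝ :=
  ∑ i, Real.log ((1 - α) * phi (X i) + α * conv γ (X i))

/-- `0` is a median of the single-coordinate posterior distribution. -/
def medianZero (γ : ℝ → ℝ) (α x : ℝ) : Prop :=
  2⁻¹ ≤ coordPost γ α x (Set.Iic 0) ∧ 2⁻¹ ≤ coordPost γ α x (Set.Ici 0)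

/-- `t` is the posterior median threshold function: for each `α ∈ (0,1)`,
`t α > 0` and the posterior median at observation `x` is `0` iff `|x| ≤ t α`. -/
def IsThreshold (γ : ℝ → ℝ) (t : ℝ → ℝ) : Prop :=
  ∀ α ∈ Set.Ioo (0 : ℝ) 1, 0 < t α ∧ ∀ x : ℝ, (medianZero γ α x ↔ |x| ≤ t α)

/-- `hahat` is a marginal maximum likelihood empirical Bayes estimator of `α`,
with maximisation restricted to `[αn, 1]`. -/
def IsMMLE (γ : ℝ → ℝ) {n : ℕ} (αn : ℝ) (hahat : (Fin n → ℝ) → ℝ) : Prop :=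
  Measurable hahat ∧ ∀ X : Fin n → ℝ, hahat X ∈ Set.Icc αn 1 ∧
    ∀ α ∈ Set.Icc αn 1, logMarg γ α X ≤ logMarg γ (hahat X) X

/-- Expected posterior squared `L²`-moment
`E_{θ₀} ∫ ‖θ - θ₀‖² dΠ_{ĥα}(θ | X)` for the plug-in posterior. -/
def postRisk (γ : ℝ → ℝ) {n : ℕ} (hahat : (Fin n → ℝ) → ℝ) (θ0 : Fin n → ℝ) : ℝ :=
  ∫ X, (∫ θ, (∑ i, (θ i - θ0 i) ^ 2) ∂(post γ n (hahat X) X)) ∂(Pdata n θ0)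

/-- Posterior second moment `r₂(α, μ, x) = ∫ (u - μ)² dπ_α(u|x)`. -/
def r2 (γ : ℝ → ℝ) (α μ x : ℝ) : ℝ := ∫ u, (u - μ) ^ 2 ∂(coordPost γ α x)

lemma phi_pos (x : ℝ) : 0 < phi x := by
  unfold phi; positivity

lemma cauchyDen_pos (x : ℝ) : 0 < cauchyDen x := by
  unfold cauchyDen; positivity

lemma phi_cont : Continuous phi := by
  unfold phi; fun_prop

lemma cauchyDen_cont : Continuous cauchyDen := by
  unfold cauchyDen
  refine Continuous.inv₀ (by fun_prop) (fun x => ?_)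
  positivity

lemma cauchyDen_le_one (x : ℝ) : cauchyDen x ≤ 1 := by
  unfold cauchyDen
  apply inv_le_one_of_one_le₀
  nlinarith [Real.pi_gt_three, sq_nonneg x]

lemma pow_phi_integrable (k : ℕ) : Integrable (fun v : ℝ => v ^ k * phi v) := by
  have h := integrable_rpow_mul_exp_neg_mul_sq (b := 1 / 2) (by norm_num) (s := (k : ℝ))
    (by have : (0 : ℝ) ≤ k := Nat.cast_nonneg k
        linarith)
  refine (h.div_const (Real.sqrt (2 * Real.pi))).congr (Filter.Eventually.of_forall fun v => ?_)
  simp only [phi, Real.rpow_natCast]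
  rw [show -(1 / 2 : ℝ) * v ^ 2 = -v ^ 2 / 2 by ring]
  ring

lemma phi_integrable : Integrable phi := by
  simpa using pow_phi_integrable 0

/-- Moment constant used for upper bounds. -/
def bigM : ℝ := ∫ v, (1 + v ^ 2) ^ 2 * phi v

/-- Constant used for the lower bound on `g`. -/
def lowC : ℝ := ∫ v, (1 + v ^ 2)⁻¹ * phi v

lemma bigM_integrable : Integrable (fun v : ℝ => (1 + v ^ 2) ^ 2 * phi v) := by
  have := (phi_integrable.add ((pow_phi_integrable 2).const_mul 2)).add (pow_phi_integrable 4)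
  refine this.congr (Filter.Eventually.of_forall fun v => ?_)
  simp only [Pi.add_apply]
  ring

lemma lowC_integrable : Integrable (fun v : ℝ => (1 + v ^ 2)⁻¹ * phi v) := by
  refine phi_integrable.mono' ?_ (Filter.Eventually.of_forall fun v => ?_)
  · have : Continuous (fun v : ℝ => (1 + v ^ 2)⁻¹) :=
      Continuous.inv₀ (by fun_prop) (fun x => by positivity)
    exact (this.mul phi_cont).aestronglyMeasurable
  · have h := phi_pos v
    rw [Real.norm_of_nonneg (by positivity)]
    have : (1 + v ^ 2)⁻¹ ≤ 1 := inv_le_one_of_one_le₀ (by nlinarith [sq_nonneg v])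
    nlinarith

lemma lowC_pos : 0 < lowC := by
  unfold lowC
  rw [integral_pos_iff_support_of_nonneg _ lowC_integrable]
  · have : Function.support (fun v : ℝ => (1 + v ^ 2)⁻¹ * phi v) = Set.univ := by
      ext v
      have := phi_pos v
      simp only [Function.mem_support, Set.mem_univ, iff_true]
      positivity
    rw [this]; simp
  · intro v
    have := phi_pos v
    simp only [Pi.zero_apply]
    positivity

lemma bigM_nonneg : 0 ≤ bigM := by
  refine integral_nonneg fun v => ?_
  have := phi_pos v
  simp only [Pi.zero_apply]
  positivity

lemma cauchy_upper (x v : ℝ) : cauchyDen (x - v) ≤ 2 * (1 + v ^ 2) * cauchyDen x := by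
  unfold cauchyDen
  rw [← div_eq_mul_inv, inv_eq_one_div, div_le_div_iff₀ (by positivity) (by positivity)]
  have : 1 + x ^ 2 ≤ 2 * (1 + v ^ 2) * (1 + (x - v) ^ 2) := by
    nlinarith [sq_nonneg (x - 2 * v), sq_nonneg (v * (x - v))]
  nlinarith [Real.pi_pos]

lemma cauchy_lower (x v : ℝ) : (1 / 2) * (1 + v ^ 2)⁻¹ * cauchyDen x ≤ cauchyDen (x - v) := by
  have h := cauchy_upper (x - v) (-v)
  rw [sub_neg_eq_add, sub_add_cancel, neg_sq] at h
  have h3 : (0 : ℝ) < 1 + v ^ 2 := by positivity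
  calc (1 / 2) * (1 + v ^ 2)⁻¹ * cauchyDen x
      ≤ (1 / 2) * (1 + v ^ 2)⁻¹ * (2 * (1 + v ^ 2) * cauchyDen (x - v)) := by gcongr
    _ = cauchyDen (x - v) := by field_simp

lemma conv_eq (x : ℝ) : conv cauchyDen x = ∫ v, phi v * cauchyDen (x - v) := by
  unfold conv
  rw [← integral_sub_left_eq_self _ volume x]
  simp

lemma mom_integrable (k : ℕ) (x : ℝ) :
    Integrable (fun u => (x - u) ^ k * (phi (x - u) * cauchyDen u)) := by
  have h := (pow_phi_integrable k).comp_sub_left x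
  refine h.mono ?_ (Filter.Eventually.of_forall fun u => ?_)
  · have := phi_cont
    have := cauchyDen_cont
    exact Continuous.aestronglyMeasurable (by fun_prop)
  · have h1 := cauchyDen_le_one u
    have h2 := cauchyDen_pos u
    rw [← mul_assoc, norm_mul, Real.norm_of_nonneg h2.le]
    exact mul_le_of_le_one_right (norm_nonneg _) h1

lemma conv_int (x : ℝ) : Integrable (fun u => phi (x - u) * cauchyDen u) := by
  simpa using mom_integrable 0 x

lemma conv_lower (x : ℝ) : lowC / 2 * cauchyDen x ≤ conv cauchyDen x := by
  rw [conv_eq, lowC, div_mul_eq_mul_div, mul_div_assoc, ← integral_mul_const]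
  refine integral_mono (lowC_integrable.mul_const _) ?_ fun v => ?_
  · have := (conv_int x).comp_sub_left x
    simpa using this
  · have := mul_le_mul_of_nonneg_left (cauchy_lower x v) (phi_pos v).le
    simp only
    linarith

lemma conv_pos (x : ℝ) : 0 < conv cauchyDen x :=
  lt_of_lt_of_le (by have := lowC_pos; have := cauchyDen_pos x; positivity) (conv_lower x)

lemma mom2_upper (x : ℝ) :
    ∫ u, (x - u) ^ 2 * (phi (x - u) * cauchyDen u) ≤ 2 * bigM * cauchyDen x := by
  have h : 2 * bigM * cauchyDen x
      = ∫ u, (1 + (x - u) ^ 2) ^ 2 * phi (x - u) * (2 * cauchyDen x) := by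
    rw [integral_mul_const,
      integral_sub_left_eq_self (fun v => (1 + v ^ 2) ^ 2 * phi v) volume x, bigM]
    ring
  rw [h]
  refine integral_mono (mom_integrable 2 x) ((bigM_integrable.comp_sub_left x).mul_const _)
    fun u => ?_
  have h1 := cauchy_upper x (x - u)
  rw [sub_sub_cancel] at h1
  have h2 := phi_pos (x - u)
  have h3 := cauchyDen_pos x
  have h4 := cauchyDen_pos u
  simp only
  calc (x - u) ^ 2 * (phi (x - u) * cauchyDen u)
      ≤ (1 + (x - u) ^ 2) * (phi (x - u) * (2 * (1 + (x - u) ^ 2) * cauchyDen x)) := by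
        gcongr
        linarith
    _ = _ := by ring

lemma conv_upper (x : ℝ) : conv cauchyDen x ≤ 2 * bigM * cauchyDen x := by
  have h : 2 * bigM * cauchyDen x
      = ∫ u, (1 + (x - u) ^ 2) ^ 2 * phi (x - u) * (2 * cauchyDen x) := by
    rw [integral_mul_const,
      integral_sub_left_eq_self (fun v => (1 + v ^ 2) ^ 2 * phi v) volume x, bigM]
    ring
  rw [h, conv]
  refine integral_mono (conv_int x) ((bigM_integrable.comp_sub_left x).mul_const _)
    fun u => ?_
  have h1 := cauchy_upper x (x - u)
  rw [sub_sub_cancel] at h1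
  have h2 := phi_pos (x - u)
  have h3 := cauchyDen_pos x
  simp only
  calc phi (x - u) * cauchyDen u
      ≤ (1 + (x - u) ^ 2) * (phi (x - u) * (2 * (1 + (x - u) ^ 2) * cauchyDen x)) := by
        rw [← one_mul (phi (x - u) * cauchyDen u)]
        have := cauchyDen_pos u
        gcongr
        nlinarith [sq_nonneg (x - u)]
    _ = _ := by ring

/-- Ratio constant. -/
def ratK : ℝ := 4 * bigM / lowC

lemma ratK_nonneg : 0 ≤ ratK := by
  have := bigM_nonneg
  have := lowC_pos
  unfold ratK; positivity

lemma mom2_ratio (x : ℝ) :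
    (∫ u, (x - u) ^ 2 * (phi (x - u) * cauchyDen u)) ≤ ratK * conv cauchyDen x := by
  refine (mom2_upper x).trans ?_
  have h := mul_le_mul_of_nonneg_left (conv_lower x) ratK_nonneg
  refine le_trans (le_of_eq ?_) h
  have := lowC_pos.ne'
  unfold ratK
  field_simp
  ring

lemma aWt_mem {α : ℝ} (hα : α ∈ Set.Ioo (0 : ℝ) 1) (x : ℝ) :
    0 ≤ aWt cauchyDen α x ∧ aWt cauchyDen α x ≤ 1 := by
  have h1 := conv_pos x
  have h2 := phi_pos x
  obtain ⟨h3, h4⟩ := hα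
  have h5 : 0 < (1 - α) * phi x := mul_pos (by linarith) h2
  have h6 : 0 < α * conv cauchyDen x := mul_pos h3 h1
  unfold aWt
  constructor
  · positivity
  · rw [div_le_one (by positivity)]; linarith

lemma coordDen_meas (α x : ℝ) : Measurable (fun u => coordDen cauchyDen α x u) := by
  unfold coordDen
  refine Measurable.ite (measurableSet_singleton 0) measurable_const ?_
  have := phi_cont
  have := cauchyDen_cont
  exact Continuous.measurable (by fun_prop)

lemma coordPost_zero (α x : ℝ) :
    coordPost cauchyDen α x {0} = ENNReal.ofReal (1 - aWt cauchyDen α x) := by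
  unfold coordPost
  rw [withDensity_apply _ (measurableSet_singleton 0), Measure.restrict_singleton,
    lintegral_smul_measure, lintegral_dirac]
  simp [coordDen]

lemma r2_le {α : ℝ} (hα : α ∈ Set.Ioo (0 : ℝ) 1) (μ x : ℝ) :
    r2 cauchyDen α μ x ≤ (1 - aWt cauchyDen α x) * μ ^ 2 + (2 * (x - μ) ^ 2 + 2 * ratK) := by
  obtain ⟨ha0, ha1⟩ := aWt_mem hα x
  have hg := conv_pos x
  have hK := ratK_nonneg
  have hRHS : 0 ≤ (2 * (x - μ) ^ 2 + 2 * ratK) := by positivity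
  have hA : 0 ≤ (1 - aWt cauchyDen α x) * μ ^ 2 := mul_nonneg (by linarith) (sq_nonneg _)
  unfold r2
  rw [integral_eq_lintegral_of_nonneg_ae (Filter.Eventually.of_forall fun u => sq_nonneg _)
    (Continuous.aestronglyMeasurable (by fun_prop))]
  refine ENNReal.toReal_le_of_le_ofReal (add_nonneg hA hRHS) ?_
  unfold coordPost
  rw [lintegral_withDensity_eq_lintegral_mul _ (coordDen_meas α x).ennreal_ofReal
    (by fun_prop), lintegral_add_measure, lintegral_dirac, ENNReal.ofReal_add hA hRHS, add_comm]
  refine add_le_add ?_ ?_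
  · simp only [Pi.mul_apply, coordDen, if_true]
    rw [← ENNReal.ofReal_mul (by linarith)]
    simp
  · have hi0 := conv_int x
    have hi2 := mom_integrable 2 x
    set F : ℝ → ℝ := fun u => (2 * (x - μ) ^ 2 / conv cauchyDen x) * (phi (x - u) * cauchyDen u)
      + (2 / conv cauchyDen x) * ((x - u) ^ 2 * (phi (x - u) * cauchyDen u)) with hF
    have hFi : Integrable F := (hi0.const_mul _).add (hi2.const_mul _)
    have hpt : ∀ u, 0 ≤ phi (x - u) * cauchyDen u := fun u =>
      (mul_pos (phi_pos _) (cauchyDen_pos _)).le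
    have hF0 : ∀ u, 0 ≤ F u := fun u => by
      have := hpt u
      simp only [hF]; positivity
    have hle : ∫⁻ u, ((fun u => ENNReal.ofReal (coordDen cauchyDen α x u)) *
        fun u => ENNReal.ofReal ((u - μ) ^ 2)) u ≤ ∫⁻ u, ENNReal.ofReal (F u) := by
      refine lintegral_mono_ae ?_
      have h0 : ∀ᵐ u : ℝ, u ≠ 0 := by
        rw [ae_iff]; simp
      filter_upwards [h0] with u hu
      simp only [Pi.mul_apply, coordDen, if_neg hu]
      have hp := hpt u
      rw [← ENNReal.ofReal_mul (by positivity)]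
      refine ENNReal.ofReal_le_ofReal ?_
      have e : F u = (phi (x - u) * cauchyDen u / conv cauchyDen x) *
          (2 * (x - μ) ^ 2 + 2 * (x - u) ^ 2) := by
        simp only [hF]; ring
      rw [e]
      have hq : 0 ≤ phi (x - u) * cauchyDen u / conv cauchyDen x := by positivity
      refine mul_le_mul ?_ ?_ (sq_nonneg _) hq
      · exact mul_le_of_le_one_left hq ha1
      · nlinarith [sq_nonneg ((x - μ) + (x - u))]
    refine hle.trans ?_
    rw [← ofReal_integral_eq_lintegral_ofReal hFi (Filter.Eventually.of_forall hF0)]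
    refine ENNReal.ofReal_le_ofReal ?_
    simp only [hF]
    rw [integral_add (hi0.const_mul _) (hi2.const_mul _), integral_const_mul, integral_const_mul]
    have e1 : ∫ u, phi (x - u) * cauchyDen u = conv cauchyDen x := rfl
    rw [e1, div_mul_cancel₀ _ hg.ne']
    have := mom2_ratio x
    have : 2 / conv cauchyDen x * ∫ u, (x - u) ^ 2 * (phi (x - u) * cauchyDen u)
        ≤ 2 / conv cauchyDen x * (ratK * conv cauchyDen x) := by gcongr
    have e2 : 2 / conv cauchyDen x * (ratK * conv cauchyDen x) = 2 * ratK := by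
      field_simp
    linarith

lemma thr_ineq {t : ℝ → ℝ} (ht : IsThreshold cauchyDen t) {α : ℝ}
    (hα : α ∈ Set.Ioo (0 : ℝ) 1) {y : ℝ} (hy : t α < y) :
    (1 - α) * phi y ≤ α * conv cauchyDen y := by
  obtain ⟨h0, h⟩ := ht α hα
  have hn : ¬ medianZero cauchyDen α y := by
    rw [h y, not_le]
    exact hy.trans_le (le_abs_self y)
  by_contra hc
  push Not at hc
  apply hn
  have h1 := conv_pos y
  have h2 := phi_pos y
  obtain ⟨h3, h4⟩ := hα
  have h6 : 0 < α * conv cauchyDen y := mul_pos h3 h1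
  have ha : aWt cauchyDen α y ≤ 1 / 2 := by
    unfold aWt
    rw [div_le_div_iff₀ (by linarith) (by norm_num)]
    linarith
  have hz : 2⁻¹ ≤ coordPost cauchyDen α y {0} := by
    rw [coordPost_zero]
    have : (2⁻¹ : ENNReal) = ENNReal.ofReal (1 / 2) := by
      rw [one_div, ENNReal.ofReal_inv_of_pos (by norm_num)]; simp
    rw [this]
    exact ENNReal.ofReal_le_ofReal (by linarith)
  exact ⟨hz.trans (measure_mono (by simp)), hz.trans (measure_mono (by simp))⟩

lemma spike_bound {α : ℝ} (hα : α ∈ Set.Ioo (0 : ℝ) 1) {x y : ℝ} (hy : 0 ≤ y)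
    (hthr : (1 - α) * phi y ≤ α * conv cauchyDen y) (hx : 2 * y ≤ |x|) :
    x ^ 2 * (1 - aWt cauchyDen α x) ≤ 16 * ratK := by
  have hgx := conv_pos x
  have hgy := conv_pos y
  have hpx := phi_pos x
  have hpy := phi_pos y
  obtain ⟨h3, h4⟩ := hα
  have h5 : 0 < 1 - α := by linarith
  have hK := ratK_nonneg
  have e : 1 - aWt cauchyDen α x ≤ (1 - α) * phi x / (α * conv cauchyDen x) := by
    have : 1 - aWt cauchyDen α x
        = (1 - α) * phi x / ((1 - α) * phi x + α * conv cauchyDen x) := by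
      unfold aWt
      have : (1 - α) * phi x + α * conv cauchyDen x ≠ 0 := by positivity
      field_simp
      ring
    rw [this]
    gcongr
    have : 0 < (1 - α) * phi x := by positivity
    linarith
  have hyx : y ^ 2 ≤ x ^ 2 / 4 := by
    have := abs_nonneg x
    have h := sq_abs x
    nlinarith
  have hexp : phi x * Real.exp (3 * x ^ 2 / 8) ≤ phi y := by
    unfold phi
    rw [div_mul_eq_mul_div, ← Real.exp_add]
    gcongr
    linarith
  have hq := Real.quadratic_le_exp_of_nonneg (x := 3 * x ^ 2 / 8) (by positivity)
  have hpoly : x ^ 2 * (1 + x ^ 2) ≤ 16 * Real.exp (3 * x ^ 2 / 8) := by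
    nlinarith [sq_nonneg x, sq_nonneg (x ^ 2)]
  have hg : conv cauchyDen y ≤ ratK * ((1 + x ^ 2) * conv cauchyDen x) := by
    have l1 := conv_upper y
    have l2 := conv_lower x
    have lc := lowC_pos
    have lm := bigM_nonneg
    have l3 : cauchyDen y ≤ (1 + x ^ 2) * cauchyDen x := by
      unfold cauchyDen
      rw [mul_inv, mul_inv]
      have : (1 + y ^ 2)⁻¹ ≤ 1 := inv_le_one_of_one_le₀ (by nlinarith [sq_nonneg y])
      have hx1 : (1 + x ^ 2) ≠ 0 := by positivity
      have e2 : (1 + x ^ 2) * (Real.pi⁻¹ * (1 + x ^ 2)⁻¹) = Real.pi⁻¹ := by field_simp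
      rw [e2]
      have := Real.pi_pos
      exact mul_le_of_le_one_right (by positivity) (by assumption)
    calc conv cauchyDen y ≤ 2 * bigM * cauchyDen y := l1
      _ ≤ 2 * bigM * ((1 + x ^ 2) * cauchyDen x) := by gcongr
      _ = ratK * ((1 + x ^ 2) * (lowC / 2 * cauchyDen x)) := by
          unfold ratK; field_simp; ring
      _ ≤ _ := by gcongr
  have key : x ^ 2 * ((1 - α) * phi x) ≤ 16 * ratK * (α * conv cauchyDen x) := by
    have hE := Real.exp_pos (3 * x ^ 2 / 8)
    have s : (x ^ 2 * ((1 - α) * phi x)) * Real.exp (3 * x ^ 2 / 8)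
        ≤ (16 * ratK * (α * conv cauchyDen x)) * Real.exp (3 * x ^ 2 / 8) := by
      calc (x ^ 2 * ((1 - α) * phi x)) * Real.exp (3 * x ^ 2 / 8)
          = x ^ 2 * (1 - α) * (phi x * Real.exp (3 * x ^ 2 / 8)) := by ring
        _ ≤ x ^ 2 * (1 - α) * phi y := by gcongr
        _ = x ^ 2 * ((1 - α) * phi y) := by ring
        _ ≤ x ^ 2 * (α * conv cauchyDen y) := by gcongr
        _ ≤ x ^ 2 * (α * (ratK * ((1 + x ^ 2) * conv cauchyDen x))) := by gcongr
        _ = (ratK * (α * conv cauchyDen x)) * (x ^ 2 * (1 + x ^ 2)) := by ring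
        _ ≤ (ratK * (α * conv cauchyDen x)) * (16 * Real.exp (3 * x ^ 2 / 8)) := by gcongr
        _ = _ := by ring
    exact le_of_mul_le_mul_right s hE
  calc x ^ 2 * (1 - aWt cauchyDen α x)
      ≤ x ^ 2 * ((1 - α) * phi x / (α * conv cauchyDen x)) := by gcongr
    _ = x ^ 2 * ((1 - α) * phi x) / (α * conv cauchyDen x) := by ring
    _ ≤ 16 * ratK := by
        rw [div_le_iff₀ (by positivity)]; exact key

lemma r2_pointwise {t : ℝ → ℝ} (ht : IsThreshold cauchyDen t) {α : ℝ}
    (hα : α ∈ Set.Ioo (0 : ℝ) 1) (μ x : ℝ) :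
    r2 cauchyDen α μ x ≤ (66 * ratK + 32) * (t α ^ 2 + 1) + 6 * (x - μ) ^ 2 := by
  have h0 := (ht α hα).1
  have hthr := thr_ineq ht hα (lt_add_one (t α))
  have hr := r2_le hα μ x
  obtain ⟨ha0, ha1⟩ := aWt_mem hα x
  have hK := ratK_nonneg
  have hT : 0 ≤ ratK * t α ^ 2 := by positivity
  have hmain : (1 - aWt cauchyDen α x) * μ ^ 2
      ≤ 4 * (x - μ) ^ 2 + 16 * (t α + 1) ^ 2 + 64 * ratK := by
    have hle : (1 - aWt cauchyDen α x) * μ ^ 2 ≤ μ ^ 2 :=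
      mul_le_of_le_one_left (sq_nonneg _) (by linarith)
    have hp1 : 0 ≤ (t α + 1) ^ 2 := sq_nonneg _
    have hp2 : 0 ≤ (x - μ) ^ 2 := sq_nonneg _
    by_cases h1 : 4 * x ^ 2 ≤ μ ^ 2
    · nlinarith [sq_nonneg (2 * x - μ), sq_nonneg (4 * x - μ), sq_nonneg (2 * (x - μ) + μ)]
    · push Not at h1
      by_cases h2 : 2 * (t α + 1) ≤ |x|
      · have := spike_bound hα (by linarith) hthr h2
        have : (1 - aWt cauchyDen α x) * μ ^ 2 ≤ (1 - aWt cauchyDen α x) * (4 * x ^ 2) :=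
          mul_le_mul_of_nonneg_left h1.le (by linarith)
        linarith
      · push Not at h2
        have : x ^ 2 ≤ (2 * (t α + 1)) ^ 2 := by
          rw [← sq_abs x]
          gcongr
        linarith
  nlinarith [sq_nonneg (t α - 1)]

/-- Fourth moment of the standard Gaussian. -/
def gM4 : ℝ := ∫ x, x ^ 4 ∂(ProbabilityTheory.gaussianReal 0 1)

lemma gauss_fourth (μ : ℝ) :
    Integrable (fun x => (x - μ) ^ 4) (ProbabilityTheory.gaussianReal μ 1) ∧
    ∫ x, (x - μ) ^ 4 ∂(ProbabilityTheory.gaussianReal μ 1) = gM4 := by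
  have hm : (ProbabilityTheory.gaussianReal μ 1).map (· - μ)
      = ProbabilityTheory.gaussianReal 0 1 := by
    rw [ProbabilityTheory.gaussianReal_map_sub_const]; simp
  have h4 : Integrable (fun x : ℝ => x ^ 4) (ProbabilityTheory.gaussianReal 0 1) := by
    have h := ProbabilityTheory.memLp_id_gaussianReal (μ := 0) (v := 1) 4
    have h' := h.integrable_norm_pow (p := 4) (by norm_num)
    refine h'.congr (Filter.Eventually.of_forall fun x => ?_)
    simp only [id, Real.norm_eq_abs]
    exact (Even.pow_abs (by decide) x)
  rw [← hm] at h4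
  constructor
  · exact (integrable_map_measure (Continuous.aestronglyMeasurable (by fun_prop))
      (by fun_prop)).mp h4
  · unfold gM4
    rw [← hm, integral_map (by fun_prop) (Continuous.aestronglyMeasurable (by fun_prop))]

instance Pdata_prob (n : ℕ) (θ : Fin n → ℝ) : IsProbabilityMeasure (Pdata n θ) := by
  unfold Pdata; infer_instance

lemma Pdata_fourth (n : ℕ) (θ : Fin n → ℝ) (i : Fin n) :
    Integrable (fun X : Fin n → ℝ => (X i - θ i) ^ 4) (Pdata n θ) ∧
    ∫ X, (X i - θ i) ^ 4 ∂(Pdata n θ) = gM4 := by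
  have hp : MeasurePreserving (Function.eval i) (Pdata n θ)
      (ProbabilityTheory.gaussianReal (θ i) 1) := by
    unfold Pdata
    exact measurePreserving_eval (fun i => ProbabilityTheory.gaussianReal (θ i) 1) i
  obtain ⟨h1, h2⟩ := gauss_fourth (θ i)
  rw [← hp.map_eq] at h1 h2
  constructor
  · exact (integrable_map_measure (Continuous.aestronglyMeasurable (by fun_prop))
      hp.measurable.aemeasurable).mp h1
  · rw [integral_map hp.measurable.aemeasurable
      (Continuous.aestronglyMeasurable (by fun_prop))] at h2
    exact h2

lemma gM4_nonneg : 0 ≤ gM4 := integral_nonneg fun x => by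
  simp only [Pi.zero_apply]; positivity

lemma r2_nonneg (α μ x : ℝ) : 0 ≤ r2 cauchyDen α μ x :=
  integral_nonneg fun _ => sq_nonneg _

/-- Lemma: risk bound on the event `B = {t̂ > t_n}`.
With `t̂ = t(ĥα)`, `t_n² = 2 log n - 5 log log n`, `t_A = √(2(1+A) log n)` and
`α_A = t⁻¹(t_A)`, for every real `μ` (the mean of the observed coordinate),
`E_μ[r₂(α_A, μ, x) 1_B] ≤ C (t_A² + 1) P(B)^{1/2}` for a universal `C`. -/
theorem risk_bound_large_threshold_event :
    ∃ C > (0 : ℝ), ∀ A : ℝ, 0 ≤ A → ∀ n : ℕ, 3 ≤ n →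
      ∀ t : ℝ → ℝ, IsThreshold cauchyDen t →
      ∀ αn : ℝ, αn ∈ Set.Ioo (0 : ℝ) 1 → t αn = Real.sqrt (2 * Real.log n) →
      ∀ hahat : (Fin n → ℝ) → ℝ, IsMMLE cauchyDen αn hahat →
      ∀ αA : ℝ, αA ∈ Set.Ioo (0 : ℝ) 1 →
        t αA = Real.sqrt (2 * (1 + A) * Real.log n) →
      ∀ θ : Fin n → ℝ, ∀ i : Fin n, ∀ μ : ℝ, θ i = μ →
        (∫ X in {X : Fin n → ℝ |
            Real.sqrt (2 * Real.log n - 5 * Real.log (Real.log n)) < t (hahat X)},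
            r2 cauchyDen αA μ (X i) ∂(Pdata n θ)) ≤
          C * (2 * (1 + A) * Real.log n + 1) *
            Real.sqrt ((Pdata n θ {X : Fin n → ℝ |
              Real.sqrt (2 * Real.log n - 5 * Real.log (Real.log n)) < t (hahat X)}).toReal) := by
  have hK := ratK_nonneg
  have hM := gM4_nonneg
  refine ⟨(66 * ratK + 32) + 3 * gM4 + 3, by positivity, ?_⟩
  intro A hA n hn t ht αn _ _ hahat _ αA hαA htA θ i μ hμ
  subst hμ
  have hlog : 0 ≤ Real.log n := Real.log_natCast_nonneg n
  have ht2 : t αA ^ 2 = 2 * (1 + A) * Real.log n := by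
    rw [htA, Real.sq_sqrt (by positivity)]
  have hT0 : 0 ≤ 2 * (1 + A) * Real.log n := by positivity
  have hpt := r2_pointwise ht hαA (θ i)
  rw [ht2] at hpt
  generalize 2 * (1 + A) * Real.log n = T at hpt hT0 ⊢
  generalize {X : Fin n → ℝ |
    Real.sqrt (2 * Real.log n - 5 * Real.log (Real.log n)) < t (hahat X)} = B
  generalize hP : ((Pdata n θ) B).toReal = p
  have hp0 : 0 ≤ p := hP ▸ ENNReal.toReal_nonneg
  have hp1 : p ≤ 1 := by
    rw [← hP]
    exact ENNReal.toReal_le_of_le_ofReal zero_le_one (by simpa using prob_le_one)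
  rcases hp0.eq_or_lt with hz | hpos
  · have : (Pdata n θ) B = 0 := by
      rw [← hz] at hP
      exact ((ENNReal.toReal_eq_zero_iff _).mp hP).resolve_right (measure_ne_top _ _)
    rw [Measure.restrict_eq_zero.mpr this, ← hz]
    simp
  obtain ⟨hi4, he4⟩ := Pdata_fourth n θ i
  set s := Real.sqrt p with hs
  have hs0 : 0 < s := Real.sqrt_pos.mpr hpos
  have hss : s * s = p := Real.mul_self_sqrt hp0
  have hs1 : s ≤ 1 := by rw [hs]; exact Real.sqrt_le_one.mpr hp1
  set D := (66 * ratK + 32) * (T + 1) with hD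
  have hD0 : 0 ≤ D := by positivity
  have hG : Integrable (fun X : Fin n → ℝ => (D + 3 / s) + (3 * s) * (X i - θ i) ^ 4)
      ((Pdata n θ).restrict B) :=
    (integrable_const _).add (hi4.restrict.const_mul _)
  have step : (∫ X in B, r2 cauchyDen αA (θ i) (X i) ∂(Pdata n θ))
      ≤ ∫ X in B, ((D + 3 / s) + (3 * s) * (X i - θ i) ^ 4) ∂(Pdata n θ) := by
    refine integral_mono_of_nonneg (Filter.Eventually.of_forall fun X => r2_nonneg _ _ _) hG
      (Filter.Eventually.of_forall fun X => ?_)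
    refine (hpt (X i)).trans ?_
    have : 6 * (X i - θ i) ^ 2 ≤ 3 / s + 3 * s * (X i - θ i) ^ 4 := by
      have e : 3 / s + 3 * s * (X i - θ i) ^ 4 - 6 * (X i - θ i) ^ 2
          = 3 / s * (1 - s * (X i - θ i) ^ 2) ^ 2 := by
        field_simp; ring
      have : 0 ≤ 3 / s * (1 - s * (X i - θ i) ^ 2) ^ 2 := by positivity
      linarith
    simp only
    linarith
  refine step.trans ?_
  rw [integral_add (integrable_const _) (hi4.restrict.const_mul _), integral_const_mul,
    integral_const]
  have hle : ∫ X in B, (X i - θ i) ^ 4 ∂(Pdata n θ) ≤ gM4 := by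
    rw [← he4]
    exact setIntegral_le_integral hi4 (Filter.Eventually.of_forall fun X => by
      simp only [Pi.zero_apply]; positivity)
  have hreal : ((Pdata n θ).restrict B).real Set.univ = p := by
    rw [measureReal_restrict_apply_univ]; exact hP
  rw [hreal, smul_eq_mul]
  have e1 : p * (D + 3 / s) = s * (s * D + 3) := by
    rw [← hss]; field_simp
  rw [e1]
  have b1 : s * (s * D + 3) ≤ s * (D + 3) := by
    gcongr
    exact mul_le_of_le_one_left hD0 hs1
  have b2 : 3 * s * ∫ X in B, (X i - θ i) ^ 4 ∂(Pdata n θ) ≤ 3 * s * gM4 := by gcongr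
  have b3 : 0 ≤ (3 * gM4 + 3) * T * s := by positivity
  have e3 : (66 * ratK + 32 + 3 * gM4 + 3) * (T + 1) * s
      = s * (D + 3) + 3 * s * gM4 + (3 * gM4 + 3) * T * s := by
    rw [hD]; ring
  rw [e3]
  linarith

end
end

section
/- First moment of the score for the SSL prior: with κ = 2 (the tail exponent of the Cauchy slab), there exist constants D_1, D_2 > 0 such that for all α ∈ (𝒞·log n/n, 1], D_1·ζ^{κ−1}·g_1(ζ) ≤ m̃(α) ≤ D_2·ζ^{κ−1}·g_1(ζ), where ζ = ζ(α) = min{s > 0 : β(s) = 1/α}. Moreover there exist constants c, C > 0 independent of n such that c ≤ m̃(1) ≤ C. -/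
/-!
Statement 19: first moment of the score for the SSL prior.
-/

open MeasureTheory Real Set

noncomputable section

/-- Spike inverse-scale `λ₀ = 5√(2π) n`. -/
def lam0 (n : ℕ) : ℝ := 5 * Real.sqrt (2 * Real.pi) * n

/-- Slab scale parameter `λ₁ = 0.05`. -/
def lam1 : ℝ := 0.05

/-- Spike density: Laplace with parameter `λ₀`. -/
def gamma0 (n : ℕ) (x : ℝ) : ℝ := lam0 n / 2 * Real.exp (-(lam0 n) * |x|)

/-- Slab density: Cauchy with scale `1/λ₁`. -/
def gamma1 (x : ℝ) : ℝ := lam1 / Real.pi * (1 + lam1 ^ 2 * x ^ 2)⁻¹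

/-- `g₀ = φ * γ₀`. -/
def g0 (n : ℕ) (x : ℝ) : ℝ := ∫ u, phi (x - u) * gamma0 n u

/-- `g₁ = φ * γ₁`. -/
def g1 (x : ℝ) : ℝ := ∫ u, phi (x - u) * gamma1 u

/-- `β(x) = g₁(x)/g₀(x) - 1` for the SSL prior. -/
def betaSSL (n : ℕ) (x : ℝ) : ℝ := g1 x / g0 n x - 1

/-- `m̃(α) = -E₀ β(X, α)`, `X ~ N(0,1)`, with `β(x,α) = β(x)/(1 + αβ(x))`. -/
def mtildeSSL (n : ℕ) (α : ℝ) : ℝ :=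
  -∫ x, betaSSL n x / (1 + α * betaSSL n x) ∂(ProbabilityTheory.gaussianReal 0 1)

/-- `ζα` is the SSL pseudo-threshold for `α`: the least positive solution of
`β(s) = 1/α`. -/
def IsZetaSSL (n : ℕ) (α ζα : ℝ) : Prop :=
  0 < ζα ∧ betaSSL n ζα = 1 / α ∧ ∀ s : ℝ, 0 < s → betaSSL n s = 1 / α → ζα ≤ s

lemma phi_eq_pdf (x : ℝ) : ProbabilityTheory.gaussianPDFReal 0 1 x = phi x := by
  unfold phi ProbabilityTheory.gaussianPDFReal
  simp
  ring

lemma phi_integral : ∫ x, phi x = 1 := by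
  rw [← ProbabilityTheory.integral_gaussianPDFReal_eq_one 0 (one_ne_zero)]
  simp_rw [phi_eq_pdf]

lemma sqrt_two_pi_ge : (1 : ℝ) ≤ √(2 * π) := by
  rw [Real.one_le_sqrt]
  linarith [Real.pi_gt_three]

lemma w_phi_le (y : ℝ) : (1 + y ^ 2) * phi y ≤ 2 := by
  unfold phi
  have h1 : y ^ 2 / 2 + 1 ≤ rexp (y ^ 2 / 2) := Real.add_one_le_exp _
  have h2 : rexp (-y ^ 2 / 2) = (rexp (y ^ 2 / 2))⁻¹ := by rw [← Real.exp_neg]; ring_nf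
  have h3 := sqrt_two_pi_ge
  have h4 := Real.exp_pos (y ^ 2 / 2)
  rw [h2, ← mul_div_assoc, div_le_iff₀ (by positivity), ← div_eq_mul_inv, div_le_iff₀ h4]
  nlinarith

lemma phi_le_two (y : ℝ) : phi y ≤ 2 := by
  have := w_phi_le y
  nlinarith [phi_pos y, sq_nonneg y, mul_nonneg (sq_nonneg y) (phi_pos y).le]

lemma w_phi_integrable : Integrable (fun y => (1 + y ^ 2) * phi y) := by
  have h := (integrable_exp_neg_mul_sq (b := 1 / 4) (by norm_num)).const_mul 4
  refine h.mono' ?_ ?_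
  · exact (by have := phi_cont; fun_prop : Continuous (fun y => (1 + y ^ 2) * phi y)).aestronglyMeasurable
  · refine Filter.Eventually.of_forall fun y => ?_
    rw [Real.norm_of_nonneg (mul_nonneg (by positivity) (phi_pos y).le)]
    unfold phi
    have h1 : y ^ 2 / 4 + 1 ≤ rexp (y ^ 2 / 4) := Real.add_one_le_exp _
    have h2 : rexp (-y ^ 2 / 2) = (rexp (y ^ 2 / 4))⁻¹ * rexp (-(1 / 4) * y ^ 2) := by
      rw [← Real.exp_neg, ← Real.exp_add]; ring_nf
    have h3 := sqrt_two_pi_ge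
    have h4 := Real.exp_pos (y ^ 2 / 4)
    rw [h2, ← mul_div_assoc, div_le_iff₀ (by positivity)]
    have h5 : (1 + y ^ 2) * (rexp (y ^ 2 / 4))⁻¹ ≤ 4 := by
      rw [← div_eq_mul_inv, div_le_iff₀ h4]; linarith
    have h6 := Real.exp_pos (-(1 / 4) * y ^ 2)
    nlinarith [mul_le_mul_of_nonneg_right h5 h6.le]

lemma phi_shift (x u : ℝ) : phi (x - u) = phi x * rexp (x * u - u ^ 2 / 2) := by
  unfold phi
  rw [div_mul_eq_mul_div, ← Real.exp_add]
  congr 2; ring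

/-! ### Laplace moments -/

lemma laplace_integral {a : ℝ} (ha : 0 < a) : ∫ u : ℝ, rexp (-a * |u|) = 2 / a := by
  rw [integral_comp_abs (f := fun u => rexp (-a * u))]
  have := Real.integral_rpow_mul_exp_neg_mul_Ioi (a := 1) (r := a) one_pos ha
  simp at this
  simp [neg_mul, this]
  ring

lemma laplace_integrable {a : ℝ} (ha : 0 < a) : Integrable (fun u : ℝ => rexp (-a * |u|)) := by
  refine Integrable.of_integral_ne_zero ?_
  rw [laplace_integral ha]; positivity

lemma laplace_sq_integral {a : ℝ} (ha : 0 < a) :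
    ∫ u : ℝ, u ^ 2 * rexp (-a * |u|) = 4 / a ^ 3 := by
  have h0 := integral_comp_abs (f := fun u => u ^ 2 * rexp (-a * u))
  simp only [sq_abs] at h0
  rw [h0]
  have := Real.integral_rpow_mul_exp_neg_mul_Ioi (a := 3) (r := a) (by norm_num) ha
  have hG : Real.Gamma 3 = 2 := by
    have := Real.Gamma_nat_eq_factorial 2
    rw [show ((2 : ℕ) : ℝ) + 1 = 3 by norm_num] at this
    rw [this]; norm_num [Nat.factorial]
  norm_num [hG] at this
  simp only [neg_mul, this]
  ring

lemma laplace_sq_integrable {a : ℝ} (ha : 0 < a) :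
    Integrable (fun u : ℝ => u ^ 2 * rexp (-a * |u|)) := by
  refine Integrable.of_integral_ne_zero ?_
  rw [laplace_sq_integral ha]; positivity

lemma lam0_ge (n : ℕ) : (n : ℝ) ≤ lam0 n := by
  unfold lam0
  have := sqrt_two_pi_ge
  have hn : (0 : ℝ) ≤ n := n.cast_nonneg
  nlinarith

lemma lam0_pos {n : ℕ} (hn : 1 ≤ n) : 0 < lam0 n := by
  have h := lam0_ge n
  have : (1 : ℝ) ≤ n := by exact_mod_cast hn
  linarith

lemma gamma0_nonneg (n : ℕ) (u : ℝ) : 0 ≤ gamma0 n u := by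
  unfold gamma0 lam0; positivity

lemma gamma0_cont (n : ℕ) : Continuous (gamma0 n) := by unfold gamma0; fun_prop

lemma gamma0_integrable {n : ℕ} (hn : 1 ≤ n) : Integrable (gamma0 n) :=
  (laplace_integrable (lam0_pos hn)).const_mul _

lemma gamma0_integral {n : ℕ} (hn : 1 ≤ n) : ∫ u, gamma0 n u = 1 := by
  unfold gamma0
  rw [integral_const_mul, laplace_integral (lam0_pos hn)]
  have := lam0_pos hn
  field_simp

lemma gamma0_sq_integrable {n : ℕ} (hn : 1 ≤ n) : Integrable (fun u => u ^ 2 * gamma0 n u) := by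
  refine ((laplace_sq_integrable (lam0_pos hn)).const_mul (lam0 n / 2)).congr ?_
  refine Filter.Eventually.of_forall fun u => ?_
  simp only [gamma0]; ring

lemma gamma0_sq_integral {n : ℕ} (hn : 1 ≤ n) : ∫ u, u ^ 2 * gamma0 n u = 2 / lam0 n ^ 2 := by
  have : ∀ u, u ^ 2 * gamma0 n u = (lam0 n / 2) * (u ^ 2 * rexp (-(lam0 n) * |u|)) := by
    intro u; simp only [gamma0]; ring
  simp_rw [this]
  rw [integral_const_mul, laplace_sq_integral (lam0_pos hn)]
  have := lam0_pos hn
  field_simp; norm_num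

lemma gamma0_id_integrable {n : ℕ} (hn : 1 ≤ n) : Integrable (fun u => u * gamma0 n u) := by
  refine ((gamma0_integrable hn).add (gamma0_sq_integrable hn)).mono' ?_ ?_
  · exact (by have := gamma0_cont n; fun_prop : Continuous (fun u => u * gamma0 n u)).aestronglyMeasurable
  · refine Filter.Eventually.of_forall fun u => ?_
    have h := gamma0_nonneg n u
    simp only [Pi.add_apply, norm_mul, Real.norm_eq_abs, abs_of_nonneg h]
    have : |u| ≤ 1 + u ^ 2 := by
      rw [← sq_abs]; nlinarith [sq_nonneg (|u| - 1), abs_nonneg u]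
    nlinarith

lemma gamma0_id_integral (n : ℕ) : ∫ u, u * gamma0 n u = 0 := by
  have h := integral_neg_eq_self (fun u => u * gamma0 n u) volume
  have h2 : ∀ u, (-u) * gamma0 n (-u) = -(u * gamma0 n u) := by
    intro u; simp [gamma0]
  simp_rw [h2] at h
  rw [integral_neg] at h
  linarith

lemma gamma1_nonneg (u : ℝ) : 0 ≤ gamma1 u := by
  unfold gamma1 lam1; positivity

lemma gamma1_cont : Continuous gamma1 := by
  unfold gamma1
  refine continuous_const.mul (Continuous.inv₀ (by fun_prop) fun x => by positivity)

lemma gamma1_integral : ∫ u, gamma1 u = 1 := by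
  unfold gamma1
  rw [integral_const_mul]
  have h := Measure.integral_comp_mul_left (fun y : ℝ => (1 + y ^ 2)⁻¹) lam1
  simp only [mul_pow] at h
  rw [h, integral_univ_inv_one_add_sq, abs_of_pos (by unfold lam1; norm_num)]
  have : lam1 ≠ 0 := by unfold lam1; norm_num
  have := Real.pi_ne_zero
  simp only [smul_eq_mul]
  field_simp

lemma gamma1_integrable : Integrable gamma1 := by
  refine Integrable.of_integral_ne_zero ?_
  rw [gamma1_integral]; norm_num

lemma gamma1_le (u : ℝ) : gamma1 u ≤ lam1 / π := by
  unfold gamma1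
  have : (1 + lam1 ^ 2 * u ^ 2)⁻¹ ≤ 1 := inv_le_one_of_one_le₀ (by nlinarith [mul_nonneg (sq_nonneg lam1) (sq_nonneg u)])
  have h2 : 0 ≤ lam1 / π := by unfold lam1; positivity
  nlinarith

/-! ### Convolutions -/

lemma conv_integrable_pt {f : ℝ → ℝ} (hf : Integrable f) (x : ℝ) :
    Integrable (fun u => phi (x - u) * f u) := by
  refine hf.bdd_mul (c := 2) ?_ ?_
  · exact (phi_cont.comp (by fun_prop)).aestronglyMeasurable
  · refine Filter.Eventually.of_forall fun u => ?_
    rw [Real.norm_of_nonneg (phi_pos _).le]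
    exact phi_le_two _

lemma conv_cont {f : ℝ → ℝ} (hf : Integrable f) :
    Continuous (fun x => ∫ u, phi (x - u) * f u) := by
  refine continuous_of_dominated (bound := fun u => 2 * ‖f u‖) ?_ ?_ (hf.norm.const_mul 2) ?_
  · intro x; exact (conv_integrable_pt hf x).aestronglyMeasurable
  · intro x
    refine Filter.Eventually.of_forall fun u => ?_
    rw [norm_mul, Real.norm_of_nonneg (phi_pos _).le]
    exact mul_le_mul_of_nonneg_right (phi_le_two _) (norm_nonneg _)
  · refine Filter.Eventually.of_forall fun u => ?_
    have := phi_cont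
    fun_prop

lemma conv_eq_s19 (f : ℝ → ℝ) :
    (fun x => ∫ u, phi (x - u) * f u) = convolution f phi (ContinuousLinearMap.mul ℝ ℝ) volume := by
  funext x
  unfold convolution
  congr 1; funext u; simp [mul_comm]

lemma conv_integrable {f : ℝ → ℝ} (hf : Integrable f) :
    Integrable (fun x => ∫ u, phi (x - u) * f u) := by
  rw [conv_eq_s19]
  exact hf.integrable_convolution _ phi_integrable

lemma conv_integral {f : ℝ → ℝ} (hf : Integrable f) :
    ∫ x, ∫ u, phi (x - u) * f u = ∫ u, f u := by
  have h := integral_convolution (ContinuousLinearMap.mul ℝ ℝ) hf phi_integrable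
  rw [← conv_eq_s19] at h
  simpa [phi_integral] using h

lemma g0_cont {n : ℕ} (hn : 1 ≤ n) : Continuous (g0 n) := conv_cont (gamma0_integrable hn)
lemma g0_integrable {n : ℕ} (hn : 1 ≤ n) : Integrable (g0 n) := conv_integrable (gamma0_integrable hn)
lemma g0_integral {n : ℕ} (hn : 1 ≤ n) : ∫ x, g0 n x = 1 :=
  (conv_integral (gamma0_integrable hn)).trans (gamma0_integral hn)
lemma g1_cont : Continuous g1 := conv_cont gamma1_integrable
lemma g1_integrable : Integrable g1 := conv_integrable gamma1_integrable
lemma g1_integral : ∫ x, g1 x = 1 := (conv_integral gamma1_integrable).trans gamma1_integral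

lemma g1_le (x : ℝ) : g1 x ≤ lam1 / π := by
  unfold g1
  calc ∫ u, phi (x - u) * gamma1 u ≤ ∫ u, phi (x - u) * (lam1 / π) := by
        refine integral_mono (conv_integrable_pt gamma1_integrable x)
          ((phi_integrable.comp_sub_left x).mul_const _) fun u => ?_
        exact mul_le_mul_of_nonneg_left (gamma1_le u) (phi_pos _).le
    _ = lam1 / π := by
        rw [integral_mul_const, integral_sub_left_eq_self phi volume x, phi_integral, one_mul]

lemma w_ineq (x u : ℝ) : 1 + x ^ 2 ≤ 2 * ((1 + (x - u) ^ 2) * (1 + u ^ 2)) := by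
  nlinarith [sq_nonneg (x - 2 * u), sq_nonneg ((x - u) * u), sq_nonneg (x - u), sq_nonneg u]

lemma w_ineq2 (x u : ℝ) : 1 + u ^ 2 ≤ 2 * ((1 + (x - u) ^ 2) * (1 + x ^ 2)) := by
  nlinarith [sq_nonneg (u - 2 * x), sq_nonneg ((x - u) * x), sq_nonneg (x - u), sq_nonneg x]

lemma g1_upper : ∃ C > 0, ∀ x, g1 x ≤ C / (1 + x ^ 2) := by
  set M := ∫ y, (1 + y ^ 2) * phi y with hM
  have hM0 : 0 ≤ M := integral_nonneg fun y => mul_nonneg (by positivity) (phi_pos y).le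
  refine ⟨40 * M + 1, by positivity, fun x => ?_⟩
  have hgam : ∀ u, (1 + u ^ 2) * gamma1 u ≤ 20 := by
    intro u
    unfold gamma1 lam1
    have h3 := Real.pi_gt_three
    rw [← div_eq_mul_inv, div_div, mul_div_assoc', div_le_iff₀ (by positivity)]
    nlinarith [sq_nonneg u, mul_nonneg (sq_nonneg u) (sub_pos.2 h3).le]
  rw [le_div_iff₀ (by positivity)]
  have : g1 x * (1 + x ^ 2) ≤ 40 * M := by
    unfold g1
    rw [← integral_mul_const, hM, ← integral_sub_left_eq_self (fun y => (1 + y ^ 2) * phi y) volume x,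
      ← integral_const_mul]
    refine integral_mono ((conv_integrable_pt gamma1_integrable x).mul_const _)
      ((w_phi_integrable.comp_sub_left x).const_mul _) fun u => ?_
    have h1 := w_ineq x u
    have h2 := hgam u
    have h3 := gamma1_nonneg u
    have h4 := phi_pos (x - u)
    have h5 : 0 ≤ (1 + (x - u) ^ 2) * phi (x - u) := by positivity
    calc phi (x - u) * gamma1 u * (1 + x ^ 2)
        ≤ phi (x - u) * gamma1 u * (2 * ((1 + (x - u) ^ 2) * (1 + u ^ 2))) := by gcongr
      _ = 2 * ((1 + (x - u) ^ 2) * phi (x - u)) * ((1 + u ^ 2) * gamma1 u) := by ring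
      _ ≤ 2 * ((1 + (x - u) ^ 2) * phi (x - u)) * 20 := by gcongr
      _ = _ := by ring
  linarith

lemma g1_lower : ∃ c > 0, ∀ x, c / (1 + x ^ 2) ≤ g1 x := by
  have hint : Integrable (fun y => phi y * (1 + y ^ 2)⁻¹) := by
    refine phi_integrable.mul_bdd (c := 1) ?_ ?_
    · exact (Continuous.inv₀ (by fun_prop) fun x => by positivity : Continuous fun y : ℝ => (1 + y ^ 2)⁻¹).aestronglyMeasurable
    · refine Filter.Eventually.of_forall fun u => ?_
      rw [Real.norm_of_nonneg (by positivity)]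
      exact inv_le_one_of_one_le₀ (by nlinarith [sq_nonneg u])
  set M := ∫ y, phi y * (1 + y ^ 2)⁻¹ with hM
  have hM0 : 0 < M := by
    rw [hM, integral_pos_iff_support_of_nonneg _ hint]
    · have : (Function.support fun y => phi y * (1 + y ^ 2)⁻¹) = univ := by
        ext y
        have := phi_pos y
        simp only [Function.mem_support, mem_univ, iff_true]
        positivity
      rw [this]; simp
    · intro y
      have := phi_pos y
      simp only [Pi.zero_apply]
      positivity
  refine ⟨lam1 / π / 2 * M, by unfold lam1; positivity, fun x => ?_⟩
  unfold g1
  rw [hM, ← integral_sub_left_eq_self (fun y => phi y * (1 + y ^ 2)⁻¹) volume x,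
    ← integral_const_mul, ← integral_div]
  refine integral_mono (((hint.comp_sub_left x).const_mul _).div_const _)
    (conv_integrable_pt gamma1_integrable x) fun u => ?_
  have h1 := w_ineq2 x u
  have h4 := phi_pos (x - u)
  have hl : 0 < lam1 := by unfold lam1; norm_num
  have h5 : (2 * ((1 + (x - u) ^ 2) * (1 + x ^ 2)))⁻¹ ≤ (1 + lam1 ^ 2 * u ^ 2)⁻¹ := by
    refine inv_anti₀ (by positivity) (le_trans ?_ h1)
    have : lam1 ^ 2 ≤ 1 := by unfold lam1; norm_num
    nlinarith [sq_nonneg u]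
  unfold gamma1
  calc lam1 / π / 2 * (phi (x - u) * (1 + (x - u) ^ 2)⁻¹) / (1 + x ^ 2)
      = phi (x - u) * (lam1 / π * (2 * ((1 + (x - u) ^ 2) * (1 + x ^ 2)))⁻¹) := by
        simp only [mul_inv]; field_simp
    _ ≤ _ := by gcongr

lemma lam0_ge_one {n : ℕ} (hn : 1 ≤ n) : 1 ≤ lam0 n := by
  have h := lam0_ge n
  have : (1 : ℝ) ≤ n := by exact_mod_cast hn
  linarith

lemma g0_upper {n : ℕ} (hn : 1 ≤ n) (x : ℝ) : g0 n x ≤ 12 / (1 + x ^ 2) := by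
  have hl := lam0_ge_one hn
  rw [le_div_iff₀ (by positivity)]
  have hw : ∫ u, (1 + u ^ 2) * gamma0 n u = 1 + 2 / lam0 n ^ 2 := by
    simp_rw [add_mul, one_mul]
    rw [integral_add (gamma0_integrable hn) (gamma0_sq_integrable hn), gamma0_integral hn,
      gamma0_sq_integral hn]
  have hwi : Integrable (fun u => (1 + u ^ 2) * gamma0 n u) := by
    simp_rw [add_mul, one_mul]
    exact (gamma0_integrable hn).add (gamma0_sq_integrable hn)
  have h3 : 2 / lam0 n ^ 2 ≤ 2 := div_le_self (by norm_num) (by nlinarith)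
  calc g0 n x * (1 + x ^ 2) ≤ ∫ u, 4 * ((1 + u ^ 2) * gamma0 n u) := by
        unfold g0
        rw [← integral_mul_const]
        refine integral_mono ((conv_integrable_pt (gamma0_integrable hn) x).mul_const _)
          (hwi.const_mul _) fun u => ?_
        have h1 := w_ineq x u
        have h2 := w_phi_le (x - u)
        have h3 := gamma0_nonneg n u
        have h4 := phi_pos (x - u)
        have h5 : 0 ≤ (1 + u ^ 2) * gamma0 n u := by positivity
        calc phi (x - u) * gamma0 n u * (1 + x ^ 2)
            ≤ phi (x - u) * gamma0 n u * (2 * ((1 + (x - u) ^ 2) * (1 + u ^ 2))) := by gcongr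
          _ = 2 * ((1 + (x - u) ^ 2) * phi (x - u)) * ((1 + u ^ 2) * gamma0 n u) := by ring
          _ ≤ 2 * 2 * ((1 + u ^ 2) * gamma0 n u) := by gcongr
          _ = _ := by ring
    _ = 4 * (1 + 2 / lam0 n ^ 2) := by rw [integral_const_mul, hw]
    _ ≤ 12 := by linarith

lemma g0_lower {n : ℕ} (hn : 1 ≤ n) (x : ℝ) : phi x * (1 - 1 / lam0 n ^ 2) ≤ g0 n x := by
  have hadd : Integrable (fun u => gamma0 n u + x * (u * gamma0 n u)) :=
    (gamma0_integrable hn).add ((gamma0_id_integrable hn).const_mul x)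
  have hi : Integrable (fun u => gamma0 n u + x * (u * gamma0 n u) - 1 / 2 * (u ^ 2 * gamma0 n u)) :=
    ((gamma0_integrable hn).add ((gamma0_id_integrable hn).const_mul x)).sub
      ((gamma0_sq_integrable hn).const_mul _)
  have h : ∫ u, phi x * (gamma0 n u + x * (u * gamma0 n u) - 1 / 2 * (u ^ 2 * gamma0 n u))
      = phi x * (1 - 1 / lam0 n ^ 2) := by
    rw [integral_const_mul, integral_sub hadd
      ((gamma0_sq_integrable hn).const_mul _), integral_add (gamma0_integrable hn)
      ((gamma0_id_integrable hn).const_mul x), integral_const_mul, integral_const_mul,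
      gamma0_integral hn, gamma0_id_integral, gamma0_sq_integral hn]
    ring
  rw [← h]
  unfold g0
  refine integral_mono (hi.const_mul _) (conv_integrable_pt (gamma0_integrable hn) x) fun u => ?_
  simp only
  rw [phi_shift]
  have h1 := Real.add_one_le_exp (x * u - u ^ 2 / 2)
  have h2 := mul_le_mul_of_nonneg_left h1 (mul_nonneg (phi_pos x).le (gamma0_nonneg n u))
  nlinarith

lemma g0_half {n : ℕ} (hn : 2 ≤ n) (x : ℝ) : phi x / 2 ≤ g0 n x := by
  refine le_trans ?_ (g0_lower (by omega) x)
  have h1 := lam0_ge n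
  have : (2 : ℝ) ≤ n := by exact_mod_cast hn
  have h2 : 1 / lam0 n ^ 2 ≤ 1 / 2 := one_div_le_one_div_of_le (by norm_num) (by nlinarith)
  nlinarith [phi_pos x]

lemma g0_le_two_phi {n : ℕ} (hn : 1 ≤ n) {x : ℝ} (hx : |x| ≤ lam0 n / 2) : g0 n x ≤ 2 * phi x := by
  have hl := lam0_pos hn
  have h : ∫ u, phi x * (lam0 n / 2 * rexp (-(lam0 n / 2) * |u|)) = 2 * phi x := by
    rw [integral_const_mul, integral_const_mul, laplace_integral (by positivity)]
    field_simp
  rw [← h]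
  unfold g0
  refine integral_mono (conv_integrable_pt (gamma0_integrable hn) x)
    (((laplace_integrable (by positivity)).const_mul _).const_mul _) fun u => ?_
  simp only
  rw [phi_shift, gamma0, mul_assoc, mul_left_comm (rexp _), ← Real.exp_add]
  have := phi_pos x
  gcongr
  have h1 : x * u ≤ |x| * |u| := by rw [← abs_mul]; exact le_abs_self _
  nlinarith [mul_le_mul_of_nonneg_right hx (abs_nonneg u), sq_nonneg u]

/-! ### Structure of the score -/

lemma g0_pos {n : ℕ} (hn : 2 ≤ n) (x : ℝ) : 0 < g0 n x :=
  lt_of_lt_of_le (half_pos (phi_pos x)) (g0_half hn x)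

lemma g1_pos (x : ℝ) : 0 < g1 x := by
  obtain ⟨c, hc, h⟩ := g1_lower
  exact lt_of_lt_of_le (by positivity) (h x)

lemma beta_cont {n : ℕ} (hn : 2 ≤ n) : Continuous (betaSSL n) := by
  unfold betaSSL
  exact (g1_cont.div (g0_cont (by omega)) fun x => (g0_pos hn x).ne').sub continuous_const

lemma ratio_bound : ∃ K ≥ (1 : ℝ), ∀ n : ℕ, 2 ≤ n → ∀ x, g0 n x ≤ K * g1 x := by
  obtain ⟨c, hc, h⟩ := g1_lower
  refine ⟨12 / c + 1, by have : 0 < 12 / c := by positivity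
                         linarith, fun n hn x => ?_⟩
  have h1 := g0_upper (n := n) (by omega) x
  have h2 : 12 / (1 + x ^ 2) = 12 / c * (c / (1 + x ^ 2)) := by field_simp
  have h3 : 12 / c * (c / (1 + x ^ 2)) ≤ 12 / c * g1 x := by gcongr; exact h x
  have := g1_pos x
  linarith

lemma g0_mul_beta {n : ℕ} (hn : 2 ≤ n) (x : ℝ) : g0 n x * betaSSL n x = g1 x - g0 n x := by
  have := (g0_pos hn x).ne'
  unfold betaSSL; field_simp

lemma beta_gt {n : ℕ} (hn : 2 ≤ n) (x : ℝ) : -1 < betaSSL n x := by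
  have : 0 < g1 x / g0 n x := div_pos (g1_pos x) (g0_pos hn x)
  unfold betaSSL; linarith

lemma den_pos {n : ℕ} (hn : 2 ≤ n) {α : ℝ} (ha : 0 < α) (ha1 : α ≤ 1) (x : ℝ) :
    0 < 1 + α * betaSSL n x := by
  nlinarith [beta_gt hn x]

/-- the score -/
def hsc (n : ℕ) (α x : ℝ) : ℝ := betaSSL n x / (1 + α * betaSSL n x)

/-- the nonnegative main integrand -/
def Qsc (n : ℕ) (α x : ℝ) : ℝ := g0 n x * (betaSSL n x - hsc n α x)

lemma hsc_cont {n : ℕ} (hn : 2 ≤ n) {α : ℝ} (ha : 0 < α) (ha1 : α ≤ 1) : Continuous (hsc n α) := by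
  unfold hsc
  exact (beta_cont hn).div (continuous_const.add (continuous_const.mul (beta_cont hn)))
    fun x => (den_pos hn ha ha1 x).ne'

lemma den_ge {n : ℕ} (hn : 2 ≤ n) {α K : ℝ} (ha1 : α ≤ 1) (hK1 : 1 ≤ K)
    (hK : ∀ x, g0 n x ≤ K * g1 x) {x : ℝ} (hb : betaSSL n x < 0) :
    1 ≤ K * (1 + α * betaSSL n x) := by
  have h0 := g0_pos hn x
  have h1 : 1 ≤ K * (1 + betaSSL n x) := by
    unfold betaSSL
    rw [add_sub_cancel, mul_div_assoc', le_div_iff₀ h0]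
    linarith [hK x]
  have h2 : 1 + betaSSL n x ≤ 1 + α * betaSSL n x := by nlinarith
  exact h1.trans (mul_le_mul_of_nonneg_left h2 (by linarith))

lemma hsc_abs {n : ℕ} (hn : 2 ≤ n) {α K : ℝ} (ha : 0 < α) (ha1 : α ≤ 1) (hK1 : 1 ≤ K)
    (hK : ∀ x, g0 n x ≤ K * g1 x) (x : ℝ) : |hsc n α x| ≤ K / α := by
  have hd := den_pos hn ha ha1 x
  unfold hsc
  rw [abs_div, abs_of_pos hd, div_le_div_iff₀ hd ha]
  rcases lt_or_ge (betaSSL n x) 0 with hb | hb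
  · rw [abs_of_neg hb]
    have h1 := den_ge hn ha1 hK1 hK hb
    nlinarith [beta_gt hn x]
  · rw [abs_of_nonneg hb]
    have : 0 ≤ α * betaSSL n x := by positivity
    nlinarith

lemma Qsc_eq {n : ℕ} (hn : 2 ≤ n) {α : ℝ} (ha : 0 < α) (ha1 : α ≤ 1) (x : ℝ) :
    Qsc n α x = g0 n x * (α * betaSSL n x ^ 2 / (1 + α * betaSSL n x)) := by
  have hd := (den_pos hn ha ha1 x).ne'
  unfold Qsc hsc
  congr 1
  rw [eq_div_iff hd, sub_mul, div_mul_cancel₀ _ hd]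
  ring

lemma Qsc_nonneg {n : ℕ} (hn : 2 ≤ n) {α : ℝ} (ha : 0 < α) (ha1 : α ≤ 1) (x : ℝ) :
    0 ≤ Qsc n α x := by
  rw [Qsc_eq hn ha ha1]
  have hd := den_pos hn ha ha1 x
  have h0 := g0_pos hn x
  positivity

lemma Qsc_neg_le {n : ℕ} (hn : 2 ≤ n) {α K : ℝ} (ha : 0 < α) (ha1 : α ≤ 1) (hK1 : 1 ≤ K)
    (hK : ∀ x, g0 n x ≤ K * g1 x) {x : ℝ} (hb : betaSSL n x < 0) :
    Qsc n α x ≤ α * K * g0 n x := by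
  rw [Qsc_eq hn ha ha1, mul_comm]
  have hd := den_pos hn ha ha1 x
  have h0 := g0_pos hn x
  gcongr
  rw [div_le_iff₀ hd]
  have h1 := den_ge hn ha1 hK1 hK hb
  have h2 : betaSSL n x ^ 2 ≤ 1 := by nlinarith [beta_gt hn x]
  nlinarith

lemma Qsc_le_g1 {n : ℕ} (hn : 2 ≤ n) {α K : ℝ} (ha : 0 < α) (ha1 : α ≤ 1) (hK1 : 1 ≤ K)
    (hK : ∀ x, g0 n x ≤ K * g1 x) (x : ℝ) : Qsc n α x ≤ g1 x + α * K * g0 n x := by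
  have h0 := g0_pos hn x
  have h1 := g1_pos x
  rcases lt_or_ge (betaSSL n x) 0 with hb | hb
  · linarith [Qsc_neg_le hn ha ha1 hK1 hK hb]
  · have hd := den_pos hn ha ha1 x
    have h3 : 0 ≤ hsc n α x := div_nonneg hb hd.le
    have h4 : 0 ≤ α * K * g0 n x := by positivity
    have h5 := g0_mul_beta hn x
    unfold Qsc
    nlinarith

lemma Qsc_le_sq {n : ℕ} (hn : 2 ≤ n) {α K : ℝ} (ha : 0 < α) (ha1 : α ≤ 1) (hK1 : 1 ≤ K)
    (hK : ∀ x, g0 n x ≤ K * g1 x) (x : ℝ) :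
    Qsc n α x ≤ α * (g1 x ^ 2 / g0 n x) + α * K * g0 n x := by
  have h0 := g0_pos hn x
  have h1 := g1_pos x
  rcases lt_or_ge (betaSSL n x) 0 with hb | hb
  · have : 0 ≤ α * (g1 x ^ 2 / g0 n x) := by positivity
    linarith [Qsc_neg_le hn ha ha1 hK1 hK hb]
  · have hd : 1 ≤ 1 + α * betaSSL n x := by have : 0 ≤ α * betaSSL n x := by positivity
                                            linarith
    have h4 : 0 ≤ α * K * g0 n x := by positivity
    have h5 : betaSSL n x ≤ g1 x / g0 n x := by unfold betaSSL; linarith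
    rw [Qsc_eq hn ha ha1]
    calc g0 n x * (α * betaSSL n x ^ 2 / (1 + α * betaSSL n x))
        ≤ g0 n x * (α * betaSSL n x ^ 2) := by
          gcongr; exact div_le_self (by positivity) hd
      _ ≤ g0 n x * (α * (g1 x / g0 n x) ^ 2) := by gcongr
      _ = α * (g1 x ^ 2 / g0 n x) := by field_simp
      _ ≤ _ := by linarith

lemma Qsc_ge {n : ℕ} (hn : 2 ≤ n) {α : ℝ} (ha : 0 < α) (ha1 : α ≤ 1) {x : ℝ}
    (hb : 1 / α ≤ betaSSL n x) : g1 x / 4 ≤ Qsc n α x := by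
  have h0 := g0_pos hn x
  have hab : 1 ≤ α * betaSSL n x := by
    rw [div_le_iff₀ ha] at hb; linarith
  have hb1 : 1 ≤ betaSSL n x := le_trans (by rw [le_div_iff₀ ha]; linarith) hb
  have h5 := g0_mul_beta hn x
  have h6 : betaSSL n x / 2 ≤ α * betaSSL n x ^ 2 / (1 + α * betaSSL n x) := by
    rw [le_div_iff₀ (by linarith)]
    nlinarith
  rw [Qsc_eq hn ha ha1]
  have h7 := mul_le_mul_of_nonneg_left h6 h0.le
  nlinarith

lemma Qsc_cont {n : ℕ} (hn : 2 ≤ n) {α : ℝ} (ha : 0 < α) (ha1 : α ≤ 1) : Continuous (Qsc n α) := by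
  unfold Qsc
  exact (g0_cont (by omega)).mul ((beta_cont hn).sub (hsc_cont hn ha ha1))

lemma Qsc_integrable {n : ℕ} (hn : 2 ≤ n) {α : ℝ} (ha : 0 < α) (ha1 : α ≤ 1) :
    Integrable (Qsc n α) := by
  obtain ⟨K, hK1, hK⟩ := ratio_bound
  refine (g1_integrable.add ((g0_integrable (n := n) (by omega)).const_mul (α * K))).mono'
    (Qsc_cont hn ha ha1).aestronglyMeasurable (Filter.Eventually.of_forall fun x => ?_)
  rw [Real.norm_of_nonneg (Qsc_nonneg hn ha ha1 x)]
  exact Qsc_le_g1 hn ha ha1 hK1 (hK n hn) x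

lemma mtilde_eq_phi (n : ℕ) (α : ℝ) : mtildeSSL n α = -∫ x, phi x * hsc n α x := by
  unfold mtildeSSL
  rw [ProbabilityTheory.integral_gaussianReal_eq_integral_smul one_ne_zero]
  simp_rw [phi_eq_pdf, smul_eq_mul, hsc]

lemma mul_hsc_integrable {n : ℕ} (hn : 2 ≤ n) {α : ℝ} (ha : 0 < α) (ha1 : α ≤ 1)
    {f : ℝ → ℝ} (hf : Integrable f) : Integrable (fun x => f x * hsc n α x) := by
  obtain ⟨K, hK1, hK⟩ := ratio_bound
  exact hf.mul_bdd (c := K / α) (hsc_cont hn ha ha1).aestronglyMeasurable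
    (Filter.Eventually.of_forall fun x => hsc_abs hn ha ha1 hK1 (hK n hn) x)

lemma L1_bound {n : ℕ} (hn : 2 ≤ n) : ∫ x, |g0 n x - phi x| ≤ 2 / lam0 n ^ 2 := by
  have hg := g0_integrable (n := n) (by omega)
  have hd : Integrable (fun x => g0 n x - phi x) := hg.sub phi_integrable
  have h : ∫ x, ((g0 n x - phi x) + 2 / lam0 n ^ 2 * phi x) = 2 / lam0 n ^ 2 := by
    rw [integral_add hd (phi_integrable.const_mul _), integral_sub hg phi_integrable,
      integral_const_mul, phi_integral, g0_integral (by omega)]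
    ring
  rw [← h]
  refine integral_mono hd.abs (hd.add (phi_integrable.const_mul _)) fun x => ?_
  have h1 := g0_lower (n := n) (by omega) x
  have h2 := phi_pos x
  have h3 : 0 ≤ 2 / lam0 n ^ 2 * phi x := by positivity
  have h4 : phi x * (1 / lam0 n ^ 2) = (2 / lam0 n ^ 2 * phi x) / 2 := by ring
  simp only
  rw [abs_le]
  constructor <;> nlinarith

lemma mtilde_approx {n : ℕ} (hn : 2 ≤ n) {α K : ℝ} (ha : 0 < α) (ha1 : α ≤ 1) (hK1 : 1 ≤ K)
    (hK : ∀ x, g0 n x ≤ K * g1 x) :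
    |mtildeSSL n α - ∫ x, Qsc n α x| ≤ K / α * (2 / lam0 n ^ 2) := by
  have hg := g0_integrable (n := n) (by omega)
  have hd : Integrable (fun x => g0 n x - phi x) := hg.sub phi_integrable
  have h1 : ∫ x, Qsc n α x = -∫ x, g0 n x * hsc n α x := by
    have : ∀ x, Qsc n α x = (g1 x - g0 n x) - g0 n x * hsc n α x := by
      intro x; rw [← g0_mul_beta hn]; unfold Qsc; ring
    simp_rw [this]
    have hs : Integrable (fun x => g1 x - g0 n x) := g1_integrable.sub hg
    rw [integral_sub hs (mul_hsc_integrable hn ha ha1 hg),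
      integral_sub g1_integrable hg, g1_integral, g0_integral (by omega)]
    ring
  have h2 : mtildeSSL n α - ∫ x, Qsc n α x = ∫ x, (g0 n x - phi x) * hsc n α x := by
    rw [mtilde_eq_phi, h1]
    simp_rw [sub_mul]
    rw [integral_sub (mul_hsc_integrable hn ha ha1 hg) (mul_hsc_integrable hn ha ha1 phi_integrable)]
    ring
  rw [h2]
  refine (abs_integral_le_integral_abs).trans ?_
  calc ∫ x, |(g0 n x - phi x) * hsc n α x| ≤ ∫ x, K / α * |g0 n x - phi x| := by
        refine integral_mono (mul_hsc_integrable hn ha ha1 hd).abs (hd.abs.const_mul _) fun x => ?_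
        simp only [abs_mul]
        rw [mul_comm]
        gcongr
        exact hsc_abs hn ha ha1 hK1 hK x
    _ ≤ _ := by
        rw [integral_const_mul]
        gcongr
        exact L1_bound hn

/-! ### Upper and lower bounds for the main integral -/

lemma tail_integral {t : ℝ} (ht : 0 < t) :
    ∫ x : ℝ, (Ioi t).indicator (fun y => y ^ (-2 : ℝ)) |x| = 2 / t := by
  rw [integral_comp_abs (f := (Ioi t).indicator (fun y => y ^ (-2 : ℝ))),
    setIntegral_indicator measurableSet_Ioi]
  have : Ioi (0 : ℝ) ∩ Ioi t = Ioi t := by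
    rw [Ioi_inter_Ioi]; congr 1; exact max_eq_right ht.le
  rw [this, integral_Ioi_rpow_of_lt (by norm_num) ht]
  norm_num [Real.rpow_neg_one]
  ring

lemma tail_integrable {t : ℝ} (ht : 0 < t) :
    Integrable (fun x : ℝ => (Ioi t).indicator (fun y => y ^ (-2 : ℝ)) |x|) := by
  refine Integrable.of_integral_ne_zero ?_
  rw [tail_integral ht]; positivity

lemma alpha_eq {n : ℕ} {α ζ : ℝ} (ha : 0 < α) (hb : betaSSL n ζ = 1 / α) :
    α * betaSSL n ζ = 1 := by rw [hb]; field_simp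

lemma exp_quad {y : ℝ} (hy : 0 ≤ y) : y ^ 2 / 2 ≤ rexp y := by
  have := Real.quadratic_le_exp_of_nonneg hy
  linarith

set_option maxHeartbeats 1000000 in
lemma Q_upper : ∃ D > (0 : ℝ), ∀ n : ℕ, 2 ≤ n → ∀ α ζ : ℝ, 0 < α → α ≤ 1 →
    betaSSL n ζ = 1 / α → 1 ≤ ζ → ζ ≤ lam0 n / 2 → ∫ x, Qsc n α x ≤ D / ζ := by
  obtain ⟨K, hK1, hK⟩ := ratio_bound
  obtain ⟨C1, hC1, hg1u⟩ := g1_upper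
  obtain ⟨c1, hc1, hg1l⟩ := g1_lower
  have hS := sqrt_two_pi_ge
  refine ⟨4 * C1 + (2 * C1 ^ 2 * √(2 * π) + K) * (116 / c1), by positivity, ?_⟩
  intro n hn α ζ ha ha1 hb hz hzl
  have hz0 : 0 < ζ := by linarith
  have hab := alpha_eq ha hb
  have h0 := g0_pos hn ζ
  have hbe := g0_mul_beta hn ζ
  have hb1 : 1 ≤ betaSSL n ζ := by rw [hb, le_div_iff₀ ha]; linarith
  -- bound on alpha
  have hphi : phi ζ ≤ rexp (-ζ ^ 2 / 2) := by
    unfold phi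
    exact div_le_self (Real.exp_pos _).le hS
  have halpha : α ≤ 4 / c1 * ((1 + ζ ^ 2) * rexp (-ζ ^ 2 / 2)) := by
    have e1 : α * g1 ζ ≤ 2 * g0 n ζ := by
      have : α * (g0 n ζ * betaSSL n ζ) = g0 n ζ := by
        rw [mul_left_comm, hab, mul_one]
      nlinarith
    have e2 := g0_le_two_phi (n := n) (by omega) (x := ζ) (by rwa [abs_of_pos hz0])
    have e3 := hg1l ζ
    have e4 : α * (c1 / (1 + ζ ^ 2)) ≤ 4 * rexp (-ζ ^ 2 / 2) := by
      have := mul_le_mul_of_nonneg_left e3 ha.le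
      linarith
    rw [mul_div_assoc', div_le_iff₀ (by positivity)] at e4
    rw [div_mul_eq_mul_div, le_div_iff₀ hc1]
    linarith
  set E := α * rexp (ζ ^ 2 / 8) * ζ with hE
  have hEb : E ≤ 116 / c1 / ζ := by
    rw [le_div_iff₀ hz0]
    have e1 := exp_quad (y := 3 * ζ ^ 2 / 8) (by positivity)
    have e2 : rexp (-ζ ^ 2 / 2) * rexp (ζ ^ 2 / 8) * rexp (3 * ζ ^ 2 / 8) = 1 := by
      rw [← Real.exp_add, ← Real.exp_add]; ring_nf; simp
    have e3 : (1 + ζ ^ 2) * ζ ^ 2 ≤ 29 * rexp (3 * ζ ^ 2 / 8) := by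
      have : 1 ≤ ζ ^ 2 := by nlinarith
      nlinarith
    have e4 : 0 < rexp (-ζ ^ 2 / 2) * rexp (ζ ^ 2 / 8) := by positivity
    calc E * ζ = α * (rexp (ζ ^ 2 / 8) * ζ ^ 2) := by rw [hE]; ring
      _ ≤ 4 / c1 * ((1 + ζ ^ 2) * rexp (-ζ ^ 2 / 2)) * (rexp (ζ ^ 2 / 8) * ζ ^ 2) := by gcongr
      _ = 4 / c1 * (rexp (-ζ ^ 2 / 2) * rexp (ζ ^ 2 / 8)) * ((1 + ζ ^ 2) * ζ ^ 2) := by ring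
      _ ≤ 4 / c1 * (rexp (-ζ ^ 2 / 2) * rexp (ζ ^ 2 / 8)) * (29 * rexp (3 * ζ ^ 2 / 8)) := by gcongr
      _ = 4 / c1 * 29 * (rexp (-ζ ^ 2 / 2) * rexp (ζ ^ 2 / 8) * rexp (3 * ζ ^ 2 / 8)) := by ring
      _ = 116 / c1 := by rw [e2]; ring
  have hE0 : 0 ≤ E := by positivity
  have haE : α ≤ E := by
    have : 1 ≤ rexp (ζ ^ 2 / 8) := Real.one_le_exp (by positivity)
    rw [hE]
    nlinarith [mul_le_mul this hz zero_le_one (by positivity)]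
  set B := 2 * C1 ^ 2 * √(2 * π) * (α * rexp (ζ ^ 2 / 8)) with hB
  have hB0 : 0 ≤ B := by positivity
  have ht : 0 < ζ / 2 := by positivity
  have hind : Integrable ((Icc (-(ζ / 2)) (ζ / 2)).indicator (fun _ : ℝ => B)) :=
    (integrableOn_const (by simp)).integrable_indicator measurableSet_Icc
  have hi12 : Integrable (fun x : ℝ => C1 * (Ioi (ζ / 2)).indicator (fun y => y ^ (-2 : ℝ)) |x|
      + (Icc (-(ζ / 2)) (ζ / 2)).indicator (fun _ : ℝ => B) x) :=
    ((tail_integrable ht).const_mul C1).add hind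
  have hg := (g0_integrable (n := n) (by omega)).const_mul (α * K)
  have hval : ∫ x : ℝ, ((C1 * (Ioi (ζ / 2)).indicator (fun y => y ^ (-2 : ℝ)) |x|
      + (Icc (-(ζ / 2)) (ζ / 2)).indicator (fun _ : ℝ => B) x) + α * K * g0 n x)
      = C1 * (2 / (ζ / 2)) + ζ * B + α * K := by
    rw [integral_add hi12 hg, integral_add ((tail_integrable ht).const_mul C1) hind,
      integral_const_mul, integral_const_mul, tail_integral ht, g0_integral (by omega),
      integral_indicator measurableSet_Icc, setIntegral_const]
    have : volume.real (Icc (-(ζ / 2)) (ζ / 2)) = ζ := by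
      rw [Real.volume_real_Icc_of_le (by linarith)]; ring
    rw [this]; simp
  have hmain : ∫ x, Qsc n α x ≤ C1 * (2 / (ζ / 2)) + ζ * B + α * K := by
    rw [← hval]
    refine integral_mono (Qsc_integrable hn ha ha1) (hi12.add hg) fun x => ?_
    simp only
    rcases lt_or_ge (ζ / 2) |x| with hx | hx
    · have e1 := Qsc_le_g1 hn ha ha1 hK1 (hK n hn) x
      have hx0 : 0 < |x| := by linarith
      rw [indicator_of_mem (show |x| ∈ Ioi (ζ / 2) from hx)]
      have e2 : g1 x ≤ C1 * |x| ^ (-2 : ℝ) := by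
        refine (hg1u x).trans ?_
        rw [Real.rpow_neg hx0.le, div_eq_mul_inv]
        norm_cast
        rw [sq_abs]
        have : 0 < x ^ 2 := by rw [← sq_abs]; positivity
        gcongr
        linarith
      have e3 : 0 ≤ (Icc (-(ζ / 2)) (ζ / 2)).indicator (fun _ : ℝ => B) x :=
        indicator_nonneg (fun _ _ => hB0) x
      linarith
    · have e1 := Qsc_le_sq hn ha ha1 hK1 (hK n hn) x
      rw [indicator_of_notMem (show |x| ∉ Ioi (ζ / 2) from not_lt.2 hx),
        indicator_of_mem (show x ∈ Icc (-(ζ / 2)) (ζ / 2) from abs_le.1 hx)]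
      have e2 : g1 x ≤ C1 := (hg1u x).trans (div_le_self hC1.le (by nlinarith [sq_nonneg x]))
      have e3 := g0_half hn x
      have e4 : 1 / √(2 * π) * rexp (-(ζ ^ 2 / 8)) ≤ phi x := by
        unfold phi
        rw [div_mul_eq_mul_div, one_mul]
        gcongr
        have : x ^ 2 ≤ (ζ / 2) ^ 2 := by rw [← sq_abs]; gcongr
        linarith
      have e5 : α * (g1 x ^ 2 / g0 n x) ≤ B := by
        have e6 : g1 x ^ 2 / g0 n x ≤ C1 ^ 2 / (1 / √(2 * π) * rexp (-(ζ ^ 2 / 8)) / 2) := by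
          have := g1_pos x
          gcongr
          linarith
        have e7 : C1 ^ 2 / (1 / √(2 * π) * rexp (-(ζ ^ 2 / 8)) / 2)
            = 2 * C1 ^ 2 * √(2 * π) * rexp (ζ ^ 2 / 8) := by
          rw [Real.exp_neg]; field_simp
        rw [e7] at e6
        calc _ ≤ _ := mul_le_mul_of_nonneg_left e6 ha.le
          _ = B := by rw [hB]; ring
      linarith
  refine hmain.trans ?_
  have f1 : C1 * (2 / (ζ / 2)) = 4 * C1 / ζ := by field_simp; ring
  have f2 : ζ * B = 2 * C1 ^ 2 * √(2 * π) * E := by rw [hB, hE]; ring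
  have f3 : 2 * C1 ^ 2 * √(2 * π) * E ≤ 2 * C1 ^ 2 * √(2 * π) * (116 / c1 / ζ) := by gcongr
  have f4 : α * K ≤ K * (116 / c1 / ζ) := by
    rw [mul_comm]; gcongr; exact haE.trans hEb
  rw [f1, f2]
  calc _ ≤ 4 * C1 / ζ + 2 * C1 ^ 2 * √(2 * π) * (116 / c1 / ζ) + K * (116 / c1 / ζ) := by linarith
    _ = _ := by ring

set_option maxHeartbeats 1000000 in
lemma Q_lower : ∃ K0 ≥ (2 : ℝ), ∃ d > (0 : ℝ), ∀ n : ℕ, 2 ≤ n → ∀ α ζ : ℝ, 0 < α → α ≤ 1 →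
    betaSSL n ζ = 1 / α → 1 ≤ ζ → 2 * K0 * ζ ≤ lam0 n / 2 → d / ζ ≤ ∫ x, Qsc n α x := by
  obtain ⟨C1, hC1, hg1u⟩ := g1_upper
  obtain ⟨c1, hc1, hg1l⟩ := g1_lower
  have hS := sqrt_two_pi_ge
  set K0 := 2 + 512 * (2 * C1 + 1) / (9 * c1) with hK0
  have hK02 : 2 ≤ K0 := by
    have : 0 < 512 * (2 * C1 + 1) / (9 * c1) := by positivity
    linarith
  have hK03 : 2 * C1 + 1 ≤ c1 * 9 / 512 * K0 := by
    rw [hK0, mul_add]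
    have : c1 * 9 / 512 * (512 * (2 * C1 + 1) / (9 * c1)) = 2 * C1 + 1 := by field_simp
    rw [this]
    have : 0 < c1 * 9 / 512 * 2 := by positivity
    linarith
  refine ⟨K0, hK02, c1 / (20 * K0), by positivity, ?_⟩
  intro n hn α ζ ha ha1 hb hz hzl
  have hz0 : 0 < ζ := by linarith
  have hK0pos : 0 < K0 := by linarith
  have h0 := g0_pos hn ζ
  have hinv : 1 / α ≤ 2 * C1 * √(2 * π) * rexp (ζ ^ 2 / 2) := by
    rw [← hb]
    have e1 : betaSSL n ζ ≤ g1 ζ / g0 n ζ := by unfold betaSSL; linarith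
    have e2 : g1 ζ ≤ C1 := (hg1u ζ).trans (div_le_self hC1.le (by nlinarith [sq_nonneg ζ]))
    have e3 : g1 ζ / g0 n ζ ≤ C1 / (phi ζ / 2) := by
      have := phi_pos ζ
      gcongr
      exact g0_half hn ζ
    have e4 : C1 / (phi ζ / 2) = 2 * C1 * √(2 * π) * rexp (ζ ^ 2 / 2) := by
      unfold phi
      rw [neg_div, Real.exp_neg]; field_simp
    linarith
  have key : ∀ x ∈ Icc (K0 * ζ) (2 * K0 * ζ), c1 / (20 * K0 ^ 2 * ζ ^ 2) ≤ Qsc n α x := by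
    intro x hx
    have hx1 : K0 ≤ x := by nlinarith [hx.1]
    have hx2 : 2 * ζ ≤ x := by nlinarith [hx.1]
    have hx0 : 0 < x := by linarith
    have hxl : |x| ≤ lam0 n / 2 := by rw [abs_of_pos hx0]; linarith [hx.2]
    have hbeta : 1 / α ≤ betaSSL n x := by
      have e0 := g0_le_two_phi (n := n) (by omega) hxl
      have e1 : c1 / (1 + x ^ 2) / (2 * phi x) ≤ g1 x / g0 n x := by
        have := g0_pos hn x
        have := g1_pos x
        gcongr
        exact hg1l x
      have e2 : c1 / (1 + x ^ 2) / (2 * phi x)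
          = c1 * √(2 * π) / 2 * (rexp (x ^ 2 / 2) / (1 + x ^ 2)) := by
        unfold phi
        rw [neg_div, Real.exp_neg]; field_simp
      have e3 : rexp (ζ ^ 2 / 2) * (9 * x / 256) ≤ rexp (x ^ 2 / 2) / (1 + x ^ 2) := by
        rw [le_div_iff₀ (by positivity)]
        have f1 : rexp (ζ ^ 2 / 2) * rexp (3 * x ^ 2 / 8) ≤ rexp (x ^ 2 / 2) := by
          rw [← Real.exp_add]
          gcongr
          nlinarith
        have f2 := exp_quad (y := 3 * x ^ 2 / 8) (by positivity)
        have f3 : 9 * x / 256 * (1 + x ^ 2) ≤ (3 * x ^ 2 / 8) ^ 2 / 2 := by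
          have g1 : 1 ≤ x := by linarith
          have g2 : 1 + x ^ 2 ≤ 2 * x ^ 2 := by nlinarith
          have g3 : x * (1 + x ^ 2) ≤ x * (2 * x ^ 2) := by gcongr
          have g4 : x ^ 3 * 1 ≤ x ^ 3 * x := by gcongr
          nlinarith
        have f4 := Real.exp_pos (ζ ^ 2 / 2)
        nlinarith [mul_le_mul_of_nonneg_left (f3.trans f2) f4.le]
      have e4 : (2 * C1 + 1) * √(2 * π) * rexp (ζ ^ 2 / 2)
          ≤ c1 * √(2 * π) / 2 * (rexp (x ^ 2 / 2) / (1 + x ^ 2)) := by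
        have f1 : 2 * C1 + 1 ≤ c1 * 9 / 512 * x := hK03.trans (by gcongr)
        calc _ ≤ c1 * 9 / 512 * x * √(2 * π) * rexp (ζ ^ 2 / 2) := by gcongr
          _ = c1 * √(2 * π) / 2 * (rexp (ζ ^ 2 / 2) * (9 * x / 256)) := by ring
          _ ≤ _ := by gcongr
      have e5 : 1 ≤ √(2 * π) * rexp (ζ ^ 2 / 2) := by
        have : 1 ≤ rexp (ζ ^ 2 / 2) := Real.one_le_exp (by positivity)
        nlinarith
      rw [betaSSL]
      nlinarith
    refine le_trans ?_ (Qsc_ge hn ha ha1 hbeta)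
    have e1 := hg1l x
    have e2 : c1 / (5 * K0 ^ 2 * ζ ^ 2) ≤ c1 / (1 + x ^ 2) := by
      gcongr
      have : x ^ 2 ≤ (2 * K0 * ζ) ^ 2 := by gcongr; exact hx.2
      have h1 : 1 ≤ K0 * ζ := by nlinarith
      nlinarith
    calc c1 / (20 * K0 ^ 2 * ζ ^ 2) = c1 / (5 * K0 ^ 2 * ζ ^ 2) / 4 := by field_simp; norm_num
      _ ≤ g1 x / 4 := by linarith
  have hQi := Qsc_integrable hn ha ha1
  calc c1 / (20 * K0) / ζ = ∫ x in Icc (K0 * ζ) (2 * K0 * ζ), c1 / (20 * K0 ^ 2 * ζ ^ 2) := by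
        rw [setIntegral_const, Real.volume_real_Icc_of_le (by nlinarith), smul_eq_mul]
        field_simp
        ring
    _ ≤ ∫ x in Icc (K0 * ζ) (2 * K0 * ζ), Qsc n α x :=
        setIntegral_mono_on (integrableOn_const (by simp)) hQi.integrableOn measurableSet_Icc key
    _ ≤ ∫ x, Qsc n α x :=
        setIntegral_le_integral hQi (Filter.Eventually.of_forall fun x => Qsc_nonneg hn ha ha1 x)

lemma beta_lt_one {n : ℕ} (hn : 2 ≤ n) {x : ℝ} (hx0 : 0 ≤ x) (hx : x ≤ 1) : betaSSL n x < 1 := by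
  have h0 := g0_pos hn x
  have h1 := g0_half hn x
  have h2 := g1_le x
  have h3 : lam1 / π ≤ 1 / 60 := by
    unfold lam1
    rw [div_le_iff₀ Real.pi_pos]
    nlinarith [Real.pi_gt_three]
  have hS : √(2 * π) ≤ 3 := by
    rw [Real.sqrt_le_left (by norm_num)]
    nlinarith [Real.pi_lt_four]
  have h4 : 1 / 6 ≤ phi x := by
    unfold phi
    have hS1 := sqrt_two_pi_ge
    rw [le_div_iff₀ (by positivity)]
    have := Real.add_one_le_exp (-x ^ 2 / 2)
    nlinarith
  unfold betaSSL
  have : g1 x / g0 n x < 2 := by rw [div_lt_iff₀ h0]; linarith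
  linarith

lemma part_two : ∃ c > (0 : ℝ), ∃ C > (0 : ℝ), ∃ N1 : ℕ, ∀ n : ℕ, N1 ≤ n →
      c ≤ mtildeSSL n 1 ∧ mtildeSSL n 1 ≤ C := by
  obtain ⟨K, hK1, hK⟩ := ratio_bound
  refine ⟨1, one_pos, K, by linarith, 2, fun n hn => ?_⟩
  have hi := mul_hsc_integrable hn one_pos le_rfl phi_integrable
  rw [mtilde_eq_phi, ← integral_neg]
  constructor
  · have hsq : Integrable (fun x => rexp (-1 * x ^ 2)) := integrable_exp_neg_mul_sq one_pos
    have hval : ∫ x, (5 * rexp (-1 * x ^ 2) - phi x) = 5 * √π - 1 := by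
      rw [integral_sub (hsq.const_mul 5) phi_integrable, integral_const_mul, integral_gaussian,
        phi_integral, div_one]
    have h1 : 1 ≤ √π := by rw [Real.one_le_sqrt]; linarith [Real.pi_gt_three]
    calc (1 : ℝ) ≤ 5 * √π - 1 := by linarith
      _ ≤ _ := by
        rw [← hval]
        refine integral_mono ((hsq.const_mul 5).sub phi_integrable) hi.neg fun x => ?_
        have h0 := g0_pos hn x
        have h1 := g1_pos x
        have hp := phi_pos x
        have e1 : hsc n 1 x = 1 - g0 n x / g1 x := by
          unfold hsc betaSSL
          rw [one_mul, add_sub_cancel]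
          field_simp
        have e2 : phi x / 2 / (lam1 / π) ≤ g0 n x / g1 x := by
          gcongr
          · exact g0_half hn x
          · exact g1_le x
        have e3 : phi x * (phi x / 2 / (lam1 / π)) = 5 * rexp (-1 * x ^ 2) := by
          unfold phi lam1
          have s1 : √(2 * π) * √(2 * π) = 2 * π := Real.mul_self_sqrt (by positivity)
          have s2 : rexp (-x ^ 2 / 2) * rexp (-x ^ 2 / 2) = rexp (-1 * x ^ 2) := by
            rw [← Real.exp_add]; ring_nf
          calc _ = (rexp (-x ^ 2 / 2) * rexp (-x ^ 2 / 2)) / (√(2 * π) * √(2 * π)) / 2 / (0.05 / π) := by ring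
            _ = _ := by rw [s1, s2]; field_simp; norm_num
        simp only
        rw [e1]
        nlinarith [mul_le_mul_of_nonneg_left e2 hp.le]
  · calc ∫ x, -(phi x * hsc n 1 x) ≤ ∫ x, phi x * K := by
          refine integral_mono hi.neg (phi_integrable.mul_const K) fun x => ?_
          have h1 := hsc_abs hn one_pos le_rfl hK1 (hK n hn) x
          have hp := phi_pos x
          have h2 := (abs_le.1 h1).1
          rw [div_one] at h2
          simp only
          nlinarith
      _ = K := by rw [integral_mul_const, phi_integral, one_mul]

lemma zeta_le {n : ℕ} (hn : 3 ≤ n) {Ccal α ζ : ℝ} (hC : 1 < Ccal)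
    (hyp : (n : ℝ) / (Ccal * Real.log n) ≤ betaSSL n (Real.sqrt (2 * Real.log n)))
    (ha : Ccal * Real.log n / n < α) (ha1 : α ≤ 1) (hlog : 1 ≤ Real.log n)
    (hz : IsZetaSSL n α ζ) : ζ ≤ √(2 * Real.log n) := by
  have hn2 : 2 ≤ n := by omega
  have hnr : (0 : ℝ) < n := by positivity
  have hl : 0 < Ccal * Real.log n := by positivity
  have hapos : 0 < α := lt_trans (by positivity) ha
  have h1 : 1 / α ≤ (n : ℝ) / (Ccal * Real.log n) := by
    rw [div_lt_iff₀ hnr] at ha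
    rw [div_le_div_iff₀ hapos hl]; linarith
  have h2 : 1 ≤ 1 / α := by rw [le_div_iff₀ hapos]; linarith
  have h3 := beta_lt_one hn2 (le_refl 0) zero_le_one
  obtain ⟨t, ht, htb⟩ := intermediate_value_Icc (Real.sqrt_nonneg (2 * Real.log n))
    (beta_cont hn2).continuousOn (show 1 / α ∈ Icc _ _ from ⟨by linarith, by linarith⟩)
  have ht0 : t ≠ 0 := by
    rintro rfl; linarith
  exact (hz.2.2 t (lt_of_le_of_ne ht.1 (Ne.symm ht0)) htb).trans ht.2

lemma part_one (Ccal : ℝ) (hC : 1 < Ccal) :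
      ∃ D1 > (0 : ℝ), ∃ D2 > (0 : ℝ), ∃ N0 : ℕ, ∀ n : ℕ, N0 ≤ n →
        (n : ℝ) / (Ccal * Real.log n) ≤ betaSSL n (Real.sqrt (2 * Real.log n)) →
        ∀ α ∈ Set.Ioc (Ccal * Real.log n / n) 1, ∀ ζα : ℝ, IsZetaSSL n α ζα →
          D1 * (ζα ^ (2 - 1 : ℕ) * g1 ζα) ≤ mtildeSSL n α ∧
          mtildeSSL n α ≤ D2 * (ζα ^ (2 - 1 : ℕ) * g1 ζα) := by
  obtain ⟨K, hK1, hK⟩ := ratio_bound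
  obtain ⟨C1, hC1, hg1u⟩ := g1_upper
  obtain ⟨c1, hc1, hg1l⟩ := g1_lower
  obtain ⟨D, hD, hup⟩ := Q_upper
  obtain ⟨K0, hK0, d, hd, hlo⟩ := Q_lower
  have hK0p : 0 < K0 := by linarith
  have hKp : 0 < K := by linarith
  set ε := min 1 (min (d / (4 * K)) (1 / (4 * K0))) with hε
  have hεp : 0 < ε := by positivity
  obtain ⟨N, hN⟩ := exists_nat_ge (2 / ε ^ 2)
  refine ⟨d / (2 * C1), by positivity, (D + 2 * K) * (2 / c1), by positivity, max N 3, ?_⟩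
  intro n hn hyp α hα ζ hz
  have hn3 : 3 ≤ n := (le_max_right _ _).trans hn
  have hnN : (N : ℝ) ≤ n := by exact_mod_cast (le_max_left _ _).trans hn
  have hn2 : 2 ≤ n := by omega
  have hnr3 : (3 : ℝ) ≤ n := by exact_mod_cast hn3
  have hnr : (0 : ℝ) < n := by linarith
  have hlog : 1 ≤ Real.log n := by
    rw [Real.le_log_iff_exp_le hnr]
    linarith [Real.exp_one_lt_d9]
  have hlp : 0 < Ccal * Real.log n := by positivity
  have ha : 0 < α := lt_trans (by positivity) hα.1
  have ha1 := hα.2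
  have hzle := zeta_le hn3 hC hyp hα.1 ha1 hlog hz
  have hb := hz.2.1
  have hz0 := hz.1
  have hz1 : 1 ≤ ζ := by
    by_contra hcon
    have h1 := beta_lt_one hn2 hz0.le (not_le.1 hcon).le
    have h2 : 1 ≤ 1 / α := by rw [le_div_iff₀ ha]; linarith
    linarith
  have hzeps : ζ ≤ ε * n := by
    have h1 : ζ ^ 2 ≤ 2 * n := by
      have h2 : √(2 * Real.log n) ^ 2 = 2 * Real.log n := Real.sq_sqrt (by linarith)
      have h3 : Real.log n ≤ n := (Real.log_le_sub_one_of_pos hnr).trans (by linarith)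
      have h4 : ζ ^ 2 ≤ √(2 * Real.log n) ^ 2 := by gcongr
      linarith
    have h5 : 2 ≤ ε ^ 2 * n := by
      have := hN.trans hnN
      rw [div_le_iff₀ (by positivity)] at this
      linarith
    refine abs_le_of_sq_le_sq' (a := ζ) (b := ε * n) ?_ (by positivity) |>.2
    nlinarith
  have hzn : ζ ≤ n := hzeps.trans (by
    have : ε ≤ 1 := min_le_left _ _
    nlinarith)
  have hzd : ζ ≤ d / (4 * K) * n := hzeps.trans (by
    have : ε ≤ d / (4 * K) := (min_le_right _ _).trans (min_le_left _ _)
    gcongr)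
  have hzk : ζ ≤ 1 / (4 * K0) * n := hzeps.trans (by
    have : ε ≤ 1 / (4 * K0) := (min_le_right _ _).trans (min_le_right _ _)
    gcongr)
  have hlam := lam0_ge n
  have hzl : 2 * K0 * ζ ≤ lam0 n / 2 := by
    have : 4 * K0 * ζ ≤ n := by
      rw [one_div, inv_mul_eq_div, le_div_iff₀ (by positivity)] at hzk
      linarith
    linarith
  have hU := hup n hn2 α ζ ha ha1 hb hz1 (by nlinarith)
  have hL := hlo n hn2 α ζ ha ha1 hb hz1 hzl
  have hA := mtilde_approx hn2 ha ha1 hK1 (hK n hn2)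
  have herr : K / α * (2 / lam0 n ^ 2) ≤ 2 * K / n := by
    have h1 : 1 ≤ α * n := by
      have := hα.1
      rw [div_lt_iff₀ hnr] at this
      nlinarith
    calc K / α * (2 / lam0 n ^ 2) ≤ K / α * (2 / (n : ℝ) ^ 2) := by gcongr
      _ = 2 * K / ((α * n) * n) := by field_simp
      _ ≤ 2 * K / (1 * n) := by gcongr
      _ = _ := by rw [one_mul]
  have herr1 : 2 * K / n ≤ 2 * K / ζ := by gcongr
  have herr2 : 2 * K / n ≤ d / ζ / 2 := by
    rw [div_div, div_le_div_iff₀ hnr (by positivity)]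
    rw [div_mul_eq_mul_div, le_div_iff₀ (by positivity)] at hzd
    linarith
  obtain ⟨hA1, hA2⟩ := abs_le.1 hA
  have hgU : ζ * g1 ζ ≤ C1 / ζ := by
    have h1 : g1 ζ ≤ C1 / ζ ^ 2 := (hg1u ζ).trans (by gcongr; linarith)
    calc ζ * g1 ζ ≤ ζ * (C1 / ζ ^ 2) := by gcongr
      _ = C1 / ζ := by field_simp
  have hgL : c1 / 2 / ζ ≤ ζ * g1 ζ := by
    have h1 : c1 / (2 * ζ ^ 2) ≤ g1 ζ := le_trans (by gcongr; nlinarith) (hg1l ζ)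
    calc c1 / 2 / ζ = ζ * (c1 / (2 * ζ ^ 2)) := by field_simp
      _ ≤ _ := by gcongr
  simp only [Nat.add_one_sub_one, pow_one]
  constructor
  · calc d / (2 * C1) * (ζ * g1 ζ) ≤ d / (2 * C1) * (C1 / ζ) := by gcongr
      _ = d / ζ / 2 := by field_simp
      _ ≤ mtildeSSL n α := by linarith
  · calc mtildeSSL n α ≤ (D + 2 * K) / ζ := by rw [add_div]; linarith
      _ = (D + 2 * K) * (2 / c1) * (c1 / 2 / ζ) := by field_simp
      _ ≤ _ := by gcongr

/-- Proposition: the first moment of the SSL score.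
With `κ = 2`, for any constant `𝒞 > 1` with `β(√(2 log n)) ≥ n/(𝒞 log n)`,
there are `D₁, D₂ > 0` such that for all `α ∈ (𝒞 log n/n, 1]`,
`D₁ ζ^{κ-1} g₁(ζ) ≤ m̃(α) ≤ D₂ ζ^{κ-1} g₁(ζ)` where `ζ = ζ(α)` is the least
positive solution of `β = 1/α`.  Moreover `c ≤ m̃(1) ≤ C` for constants
`c, C > 0` independent of `n`. -/
theorem mtildeSSL_bounds :
    (∀ Ccal : ℝ, 1 < Ccal →
      ∃ D1 > (0 : ℝ), ∃ D2 > (0 : ℝ), ∃ N0 : ℕ, ∀ n : ℕ, N0 ≤ n →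
        (n : ℝ) / (Ccal * Real.log n) ≤ betaSSL n (Real.sqrt (2 * Real.log n)) →
        ∀ α ∈ Set.Ioc (Ccal * Real.log n / n) 1, ∀ ζα : ℝ, IsZetaSSL n α ζα →
          D1 * (ζα ^ (2 - 1 : ℕ) * g1 ζα) ≤ mtildeSSL n α ∧
          mtildeSSL n α ≤ D2 * (ζα ^ (2 - 1 : ℕ) * g1 ζα)) ∧
    (∃ c > (0 : ℝ), ∃ C > (0 : ℝ), ∃ N1 : ℕ, ∀ n : ℕ, N1 ≤ n →
      c ≤ mtildeSSL n 1 ∧ mtildeSSL n 1 ≤ C) := by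
  exact ⟨part_one, part_two⟩

end
end
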